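/- Let d ≥ 2 and k ≥ 1 be integers. A tree with boundary G has the Faber-Krahn property in the class T_d^{(·,k)} of all trees with boundary with exactly k interior vertices, each of degree at least d, if and only if G is an SLO*-tree in which every interior vertex has degree exactly d. Moreover G is then uniquely determined up to isomorphism. -/

import Mathlib

/-!
Why the theorem holds.  Let `canon d k` be the greedy tree: `k` interior vertices, all of degree
`d`, numbered breadth first.  Given a tree `G` in the class, take its positive first eigenfunction
`f`, sort the interior values as `φ 0 ≥ … ≥ φ (k - 1) > 0`, and use `φ` as a test function on the
greedy tree; the sum of squares does not change.

Root `G` at a vertex of rank `0`.  Summation by parts (`abel_double`) writes `∑ f c * f (par c)`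
over the edges as a combination, with nonnegative coefficients, of the numbers `edgeCount` of edges
whose child has rank at most `a` and whose parent has rank at most `b`.  There are at most `a` such
children, and at most as many as the degrees of the `b + 1` highest-ranked vertices allow; the
greedy tree attains the smaller bound for every `a` and `b` simultaneously, up to degrees in excess
of `d` (`edgeCount_le`).  An excess degree costs more on the diagonal of the energy than it can gain
through edges (`energy_gap`, `kappa_pos`).  Hence the Rayleigh quotient of `φ` on the greedy tree is
at most `λ(G)`, and `λ(canon d k) ≤ λ(G)` (`canon_le_and_rigid`).

If equality holds, all interior degrees of `G` are `d`, `φ` is a first eigenfunction of the greedy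
tree, and the joint distribution of values along edges is the same in both trees (`bilinear_eq`).
Together with the eigenvalue equation this gives, for each interior vertex, the values of `f` at its
neighbours (`local_values_eq`), and an isomorphism is then built one vertex at a time
(`extend_embedding`, `iso_canon_of_local`).  So the minimisers are exactly the copies of the
greedy tree (`hasFK_iff`).  Finally, an SLO*-ordering of a tree with constant interior degree
determines every parent, so these copies are exactly the SLO*-trees with all interior degrees `d`
(`canon_isSLOStarTree`, `iso_canon_of_isSLOStarTree`).
-/

/-!
Common definitions for Faber-Krahn type inequalities for trees
(Bıyıkoğlu–Leydold, "Faber-Krahn Type Inequalities for Trees").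

A *tree (graph) with boundary* is a finite simple connected graph in which
boundary vertices are exactly the vertices of degree 1 and interior vertices
are the vertices of degree ≥ 2; both sets are required to be nonempty.
The Dirichlet operator is the Laplacian restricted to functions vanishing on
the boundary; `dirichletLambda` is its smallest eigenvalue.
-/

open Finset
open scoped Classical

noncomputable section

namespace FK

variable {V : Type*} [Fintype V] [DecidableEq V]

/-- A vertex is a boundary vertex iff it has degree `1`. -/
def IsBoundary (G : SimpleGraph V) (v : V) : Prop := G.degree v = 1

/-- A vertex is an interior vertex iff it has degree at least `2`. -/
def IsInterior (G : SimpleGraph V) (v : V) : Prop := 2 ≤ G.degree v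

/-- A tree with boundary: a tree with at least one interior and
one boundary vertex. -/
def IsTreeWithBoundary (G : SimpleGraph V) : Prop :=
  G.IsTree ∧ (∃ v, IsInterior G v) ∧ (∃ v, IsBoundary G v)

/-- A connected graph with boundary: every vertex is either a boundary vertex
(degree 1) or an interior vertex (degree ≥ 2), both kinds occur, and no edge
joins two boundary vertices. -/
def IsGraphWithBoundary (G : SimpleGraph V) : Prop :=
  G.Connected ∧ (∀ v, IsBoundary G v ∨ IsInterior G v) ∧
    (∃ v, IsInterior G v) ∧ (∃ v, IsBoundary G v) ∧
    (∀ v w, G.Adj v w → IsBoundary G v → ¬ IsBoundary G w)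

/-- The finset of interior vertices. -/
def interiorFinset (G : SimpleGraph V) : Finset V := univ.filter (fun v => IsInterior G v)

/-- The finset of boundary vertices. -/
def boundaryFinset (G : SimpleGraph V) : Finset V := univ.filter (fun v => IsBoundary G v)

/-- The degree sequence of `G`, as a multiset. -/
def degreeMultiset (G : SimpleGraph V) : Multiset ℕ := Finset.univ.val.map (fun v => G.degree v)

/-- The graph Laplacian `Δ = D - A` applied to a function `f : V → ℝ`. -/
def lapApply (G : SimpleGraph V) (f : V → ℝ) (v : V) : ℝ :=
  (G.degree v : ℝ) * f v - ∑ w ∈ G.neighborFinset v, f w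

/-- `f` (vanishing on the boundary, nonzero) is an eigenfunction of the
Dirichlet operator `Δ₀` with eigenvalue `μ`: the eigenvalue equation holds at
every interior vertex. -/
def IsDirichletEigenpair (G : SimpleGraph V) (μ : ℝ) (f : V → ℝ) : Prop :=
  f ≠ 0 ∧ (∀ v, IsBoundary G v → f v = 0) ∧
    ∀ v, IsInterior G v → lapApply G f v = μ * f v

/-- The first (smallest) Dirichlet eigenvalue `λ(G)`. -/
def dirichletLambda (G : SimpleGraph V) : ℝ :=
  sInf {μ : ℝ | ∃ f : V → ℝ, IsDirichletEigenpair G μ f}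

/-- The quadratic form `⟨Δ f, f⟩ = Σ_{(u,v)∈E} (f u - f v)²` of the Laplacian
(each edge counted once). -/
def quadForm (G : SimpleGraph V) (f : V → ℝ) : ℝ :=
  (∑ v, ∑ w ∈ G.neighborFinset v, (f v - f w) ^ 2) / 2

/-- The Rayleigh quotient `R_G(f)`. -/
def rayleigh (G : SimpleGraph V) (f : V → ℝ) : ℝ :=
  quadForm G f / ∑ v, f v ^ 2

/-- `w` is a child of `v` in the tree `G` rooted at `v₀`
(heights are distances from the root `v₀`). -/
def IsChild (G : SimpleGraph V) (v₀ v w : V) : Prop :=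
  G.Adj v w ∧ G.dist v₀ w = G.dist v₀ v + 1

/-- A spiral-like ordering (SLO-ordering) of the vertices of the tree `G`
rooted at `v₀`: a (strict) well-ordering `lt` satisfying (S1)-(S3). -/
def IsSLOOrdering (G : SimpleGraph V) (v₀ : V) (lt : V → V → Prop) : Prop :=
  IsStrictTotalOrder V lt ∧
  (∀ v w, lt v w → G.dist v₀ v ≤ G.dist v₀ w) ∧
  (∀ v₁ v₂ w₁ w₂, lt v₁ v₂ → IsChild G v₀ v₁ w₁ → IsChild G v₀ v₂ w₂ → lt w₁ w₂) ∧
  (∀ v w, lt v w → IsBoundary G v → IsBoundary G w)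

/-- A spiral-like ordering with increasing degrees (SLO*-ordering):
additionally (S4). -/
def IsSLOStarOrdering (G : SimpleGraph V) (v₀ : V) (lt : V → V → Prop) : Prop :=
  IsSLOOrdering G v₀ lt ∧
  ∀ v w, lt v w → IsInterior G v → IsInterior G w → G.degree v ≤ G.degree w

/-- An SLO-tree: a tree with boundary admitting an SLO-ordering. -/
def IsSLOTree (G : SimpleGraph V) : Prop :=
  IsTreeWithBoundary G ∧ ∃ (v₀ : V) (lt : V → V → Prop), IsSLOOrdering G v₀ lt

/-- An SLO*-tree: a tree with boundary admitting an SLO*-ordering. -/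
def IsSLOStarTree (G : SimpleGraph V) : Prop :=
  IsTreeWithBoundary G ∧ ∃ (v₀ : V) (lt : V → V → Prop), IsSLOStarOrdering G v₀ lt

end FK

namespace FK

/-- Membership in the class `T_d^(·,k)`: trees with boundary with exactly `k`
interior vertices, each of degree at least `d` (arbitrary total number of
vertices). -/
def inClassTdInterior (d k : ℕ) {V : Type*} [Fintype V] [DecidableEq V]
    (G : SimpleGraph V) : Prop :=
  IsTreeWithBoundary G ∧ (interiorFinset G).card = k ∧
    ∀ v, IsInterior G v → d ≤ G.degree v

/-- The Faber-Krahn property in `T_d^(·,k)` (the competitors range over all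
finite trees with boundary with `k` interior vertices of degree ≥ `d`). -/
def hasFKTdInterior (d k : ℕ) {V : Type*} [Fintype V] [DecidableEq V]
    (G : SimpleGraph V) : Prop :=
  inClassTdInterior d k G ∧
    ∀ (m : ℕ) (G' : SimpleGraph (Fin m)), inClassTdInterior d k G' →
      dirichletLambda G ≤ dirichletLambda G'

set_option linter.unusedSectionVars false

/-! ### Rooted trees -/

/-- `par` is a parent map exhibiting `G` as a tree rooted at `r`: edges are exactly the pairs
`{c, par c}` with `c ≠ r`, and `h` increases by one from parent to child.  The value `par r` is
irrelevant. -/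
structure Rooted {V : Type*} (G : SimpleGraph V) (r : V) (par : V → V) (h : V → ℕ) : Prop where
  adj_iff : ∀ u v, G.Adj u v ↔ (u ≠ r ∧ par u = v) ∨ (v ≠ r ∧ par v = u)
  height : ∀ u, u ≠ r → h u = h (par u) + 1

/-- Every tree can be rooted at any vertex, with heights given by the graph distance. -/
theorem exists_rooted {V : Type*} {G : SimpleGraph V} (hG : G.IsTree) (r : V) :
    ∃ par : V → V, Rooted G r par (G.dist r) := by
  have hex : ∀ u : V, ∃ q : V, (u ≠ r → G.Adj u q ∧ G.dist r u = G.dist r q + 1) ∧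
      ∀ w, G.Adj u w → G.dist r u = G.dist r w + 1 → w = q := by
    intro u
    obtain ⟨q, hq, hql⟩ := hG.connected.exists_path_of_dist r u
    refine ⟨q.penultimate, fun hu => ?_, fun w hw hd => ?_⟩
    · have hnil : ¬ q.Nil := SimpleGraph.Walk.not_nil_of_ne hu.symm
      have hadj := q.adj_penultimate hnil
      refine ⟨hadj.symm, ?_⟩
      rcases hG.dist_eq_dist_add_one_of_adj r hadj.symm with h | h
      · exact h
      · have h1 := SimpleGraph.dist_le q.dropLast
        have h2 : q.dropLast.length + 1 = q.length :=
          SimpleGraph.Walk.length_dropLast_add_one hnil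
        omega
    · obtain ⟨p, hp, hpl⟩ := hG.connected.exists_path_of_dist r w
      have hlen : (p.concat hw.symm).length = G.dist r u := by
        rw [SimpleGraph.Walk.length_concat, hpl, hd]
      have hpath := SimpleGraph.Walk.isPath_of_length_eq_dist _ hlen
      have := (hG.isAcyclic.subsingleton_path r u).elim ⟨_, hpath⟩ ⟨q, hq⟩
      have h3 : p.concat hw.symm = q := congrArg Subtype.val this
      rw [← h3]
      simp
  choose par hpar huniq using hex
  refine ⟨par, fun u v => ⟨fun h => ?_, ?_⟩, fun u hu => (hpar u hu).2⟩
  · rcases hG.dist_eq_dist_add_one_of_adj r h with h' | h'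
    · refine Or.inl ⟨?_, (huniq u v h h').symm⟩
      rintro rfl
      simp at h'
    · refine Or.inr ⟨?_, (huniq v u h.symm h').symm⟩
      rintro rfl
      simp at h'
  · rintro (⟨hu, rfl⟩ | ⟨hv, rfl⟩)
    · exact (hpar u hu).1
    · exact (hpar v hv).1.symm

section
variable {V : Type*} [Fintype V] [DecidableEq V] {G : SimpleGraph V} {r : V} {par : V → V}
  {h : V → ℕ}

/-- A sum over the neighbours of `v` splits into the parent and the children of `v`. -/
theorem Rooted.sum_neighbor {M : Type*} [AddCommMonoid M] (R : Rooted G r par h) (B : V → M)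
    (v : V) :
    ∑ w ∈ G.neighborFinset v, B w =
      (if v = r then 0 else B (par v)) + ∑ c with c ≠ r ∧ par c = v, B c := by
  have hdisj : Disjoint (univ.filter fun w => v ≠ r ∧ par v = w)
      (univ.filter fun c => c ≠ r ∧ par c = v) := by
    rw [Finset.disjoint_left]
    intro w hw hw'
    simp only [mem_filter, mem_univ, true_and] at hw hw'
    have h1 := R.height v hw.1
    have h2 := R.height w hw'.1
    rw [hw.2] at h1
    rw [hw'.2] at h2
    omega
  have hset : G.neighborFinset v = (univ.filter fun w => v ≠ r ∧ par v = w) ∪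
      (univ.filter fun c => c ≠ r ∧ par c = v) := by
    ext w
    simp [R.adj_iff v w]
  rw [hset, Finset.sum_union hdisj]
  congr 1
  by_cases hv : v = r
  · simp [hv]
  · simp only [hv, ne_eq, not_false_eq_true, true_and, if_false]
    rw [Finset.sum_filter]
    simp

theorem Rooted.degree_eq (R : Rooted G r par h) (v : V) :
    G.degree v = (if v = r then 0 else 1) + #{c | c ≠ r ∧ par c = v} := by
  have := R.sum_neighbor (fun _ => (1 : ℕ)) v
  simpa using this

/-- A sum over ordered pairs of adjacent vertices visits each parent-child edge twice. -/
theorem Rooted.sum_adj {M : Type*} [AddCommMonoid M] (R : Rooted G r par h) (F : V → V → M) :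
    ∑ v, ∑ w ∈ G.neighborFinset v, F v w =
      ∑ c with c ≠ r, (F c (par c) + F (par c) c) := by
  simp_rw [R.sum_neighbor]
  rw [Finset.sum_add_distrib, Finset.sum_add_distrib]
  congr 1
  · rw [Finset.sum_filter]
    refine Finset.sum_congr rfl fun v _ => ?_
    by_cases hv : v = r <;> simp [hv]
  · rw [← Finset.sum_fiberwise (univ.filter fun c => c ≠ r) par]
    refine Finset.sum_congr rfl fun v _ => ?_
    rw [Finset.filter_filter]
    refine Finset.sum_congr rfl fun c hc => ?_
    simp only [mem_filter, mem_univ, true_and] at hc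
    rw [hc.2]

end

/-- A bijection between rooted trees that respects roots and parents is a graph isomorphism. -/
theorem Rooted.nonempty_iso {V W : Type*} {G : SimpleGraph V} {H : SimpleGraph W}
    {r : V} {par : V → V} {h : V → ℕ} {r' : W} {par' : W → W} {h' : W → ℕ}
    (R : Rooted G r par h) (R' : Rooted H r' par' h') (σ : W → V) (hσ : Function.Bijective σ)
    (h0 : σ r' = r) (hp : ∀ w, w ≠ r' → par (σ w) = σ (par' w)) : Nonempty (G ≃g H) := by
  refine ⟨SimpleGraph.Iso.symm ⟨Equiv.ofBijective σ hσ, ?_⟩⟩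
  intro a b
  have hr : ∀ w, σ w ≠ r ↔ w ≠ r' := fun w => by rw [← h0, hσ.1.ne_iff]
  have key : ∀ a b, (σ a ≠ r ∧ par (σ a) = σ b) ↔ (a ≠ r' ∧ par' a = b) := by
    intro a b
    rw [hr]
    refine and_congr_right fun ha => ?_
    rw [hp a ha, hσ.1.eq_iff]
  rw [R'.adj_iff, ← key, ← key]
  exact R.adj_iff _ _

/-! ### The first Dirichlet eigenvalue -/

section
variable {V : Type*} [Fintype V] [DecidableEq V] {G : SimpleGraph V}

/-- The quadratic form `⟨f, Δ f⟩` of the graph Laplacian. -/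
def energy (G : SimpleGraph V) (f : V → ℝ) : ℝ := ∑ v, f v * lapApply G f v

theorem sum_neighbor_swap (G : SimpleGraph V) (F : V → V → ℝ) :
    ∑ v, ∑ w ∈ G.neighborFinset v, F v w = ∑ v, ∑ w ∈ G.neighborFinset v, F w v := by
  have h : ∀ v, G.neighborFinset v = univ.filter fun w => G.Adj v w := by
    intro v; ext w; simp
  simp_rw [h, Finset.sum_filter]
  rw [Finset.sum_comm]
  simp_rw [G.adj_comm]

theorem energy_eq (G : SimpleGraph V) (f : V → ℝ) :
    energy G f = ∑ v, (G.degree v : ℝ) * f v ^ 2 -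
      ∑ v, ∑ w ∈ G.neighborFinset v, f v * f w := by
  unfold energy lapApply
  rw [← Finset.sum_sub_distrib]
  refine Finset.sum_congr rfl fun v _ => ?_
  rw [mul_sub, Finset.mul_sum]
  ring

theorem energy_eq_sum_sq (G : SimpleGraph V) (f : V → ℝ) :
    2 * energy G f = ∑ v, ∑ w ∈ G.neighborFinset v, (f v - f w) ^ 2 := by
  have h1 : ∀ v, (G.degree v : ℝ) * f v ^ 2 = ∑ w ∈ G.neighborFinset v, f v ^ 2 := by
    intro v; simp
  have h2 : ∑ v, ∑ w ∈ G.neighborFinset v, f v ^ 2 = ∑ v, ∑ w ∈ G.neighborFinset v, f w ^ 2 :=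
    sum_neighbor_swap G fun v _ => f v ^ 2
  rw [energy_eq]
  simp_rw [h1]
  rw [two_mul, ← add_sub_assoc, sub_add_eq_add_sub]
  nth_rewrite 2 [h2]
  simp only [← Finset.sum_add_distrib, ← Finset.sum_sub_distrib]
  refine Finset.sum_congr rfl fun v _ => Finset.sum_congr rfl fun w _ => ?_
  ring

theorem lapApply_add_smul (G : SimpleGraph V) (f g : V → ℝ) (t : ℝ) (v : V) :
    lapApply G (f + t • g) v = lapApply G f v + t * lapApply G g v := by
  simp only [lapApply, Pi.add_apply, Pi.smul_apply, smul_eq_mul, Finset.sum_add_distrib,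
    ← Finset.mul_sum]
  ring

theorem lapApply_symm (G : SimpleGraph V) (f g : V → ℝ) :
    ∑ v, g v * lapApply G f v = ∑ v, f v * lapApply G g v := by
  simp only [lapApply, mul_sub, Finset.mul_sum, Finset.sum_sub_distrib]
  rw [sum_neighbor_swap G fun v w => g v * f w]
  congr 1
  · exact Finset.sum_congr rfl fun v _ => by ring
  · exact Finset.sum_congr rfl fun v _ => Finset.sum_congr rfl fun w _ => by ring

theorem energy_add_smul (G : SimpleGraph V) (f g : V → ℝ) (t : ℝ) :
    energy G (f + t • g) = energy G f + 2 * t * ∑ v, g v * lapApply G f v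
      + t ^ 2 * energy G g := by
  unfold energy
  have h := lapApply_symm G f g
  simp only [lapApply_add_smul, Pi.add_apply, Pi.smul_apply, smul_eq_mul]
  have : ∀ v, (f v + t * g v) * (lapApply G f v + t * lapApply G g v) =
      f v * lapApply G f v + t * (g v * lapApply G f v) + t * (f v * lapApply G g v)
        + t ^ 2 * (g v * lapApply G g v) := fun v => by ring
  simp only [this, Finset.sum_add_distrib, ← Finset.mul_sum]
  rw [← h]
  ring

theorem energy_abs_le (G : SimpleGraph V) (f : V → ℝ) :
    energy G (fun v => |f v|) ≤ energy G f := by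
  simp only [energy_eq, sq_abs]
  refine sub_le_sub_left (Finset.sum_le_sum fun v _ => Finset.sum_le_sum fun w _ => ?_) _
  rw [← abs_mul]
  exact le_abs_self _

theorem eq_zero_of_quadratic_nonneg {α β : ℝ} (h : ∀ t : ℝ, 0 ≤ 2 * t * α + t ^ 2 * β) :
    α = 0 := by
  by_contra hα
  set m := |β| + 1 with hm
  have hm0 : 0 < m := by positivity
  have hβ : β < m := lt_of_le_of_lt (le_abs_self β) (by linarith)
  have h1 := h (-α / m)
  have h2 : 2 * (-α / m) * α + (-α / m) ^ 2 * β = (α ^ 2 / m ^ 2) * (β - 2 * m) := by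
    field_simp
    ring
  rw [h2] at h1
  have h3 : 0 < α ^ 2 / m ^ 2 := by positivity
  nlinarith

theorem energy_of_eigenpair {μ : ℝ} {f : V → ℝ}
    (hIB : ∀ v, IsBoundary G v ∨ IsInterior G v) (hf : IsDirichletEigenpair G μ f) :
    energy G f = μ * ∑ v, f v ^ 2 := by
  unfold energy
  rw [Finset.mul_sum]
  refine Finset.sum_congr rfl fun v _ => ?_
  rcases hIB v with hv | hv
  · simp [hf.2.1 v hv]
  · rw [hf.2.2 v hv]; ring

/-- Variational description of the first Dirichlet eigenvalue: it is attained by a nonnegative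
eigenfunction, it bounds the Rayleigh quotient from below, and equality in that bound
characterizes eigenfunctions. -/
theorem exists_first_eigenfunction (hIB : ∀ v, IsBoundary G v ∨ IsInterior G v)
    (h_interior : ∃ v, IsInterior G v) :
    (∃ f : V → ℝ, (∀ v, 0 ≤ f v) ∧ IsDirichletEigenpair G (dirichletLambda G) f) ∧
    ∀ g : V → ℝ, (∀ v, IsBoundary G v → g v = 0) →
      dirichletLambda G * ∑ v, g v ^ 2 ≤ energy G g ∧
      (energy G g = dirichletLambda G * ∑ v, g v ^ 2 →
        ∀ v, IsInterior G v → lapApply G g v = dirichletLambda G * g v) := by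
  set K : Set (V → ℝ) := {g | (∀ v, IsBoundary G v → g v = 0) ∧ ∑ v, g v ^ 2 = 1} with hK
  have hKc : IsCompact K := by
    refine IsCompact.of_isClosed_subset (isCompact_univ_pi fun _ : V => isCompact_Icc (a := (-1 : ℝ))
      (b := 1)) ?_ ?_
    · have h1 : IsClosed {g : V → ℝ | ∀ v, IsBoundary G v → g v = 0} := by
        simp only [Set.ofPred_forall]
        exact isClosed_iInter fun v => isClosed_iInter fun _ =>
          isClosed_eq (continuous_apply v) continuous_const
      have h2 : IsClosed {g : V → ℝ | ∑ v, g v ^ 2 = 1} :=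
        isClosed_eq (by fun_prop) continuous_const
      exact h1.inter h2
    · intro g hg v _
      have : g v ^ 2 ≤ ∑ v, g v ^ 2 :=
        Finset.single_le_sum (f := fun v => g v ^ 2) (fun _ _ => sq_nonneg _) (mem_univ v)
      rw [hg.2] at this
      exact abs_le.1 (by rwa [sq_le_one_iff_abs_le_one] at this)
  have hKn : K.Nonempty := by
    obtain ⟨v₀, hv₀⟩ := h_interior
    refine ⟨Pi.single v₀ 1, fun v hv => ?_, ?_⟩
    · rw [Pi.single_eq_of_ne]
      rintro rfl
      unfold IsBoundary at hv
      unfold IsInterior at hv₀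
      omega
    · simp [Pi.single_apply, ite_pow]
  have hcont : Continuous (energy G) := by
    unfold energy lapApply
    fun_prop
  obtain ⟨g₀, hg₀, hmin⟩ := hKc.exists_isMinOn hKn hcont.continuousOn
  set μ := energy G g₀ with hμ
  have hlow : ∀ g : V → ℝ, (∀ v, IsBoundary G v → g v = 0) →
      μ * ∑ v, g v ^ 2 ≤ energy G g := by
    intro g hg
    set S := ∑ v, g v ^ 2 with hS
    have hS0 : 0 ≤ S := Finset.sum_nonneg fun _ _ => sq_nonneg _
    rcases hS0.eq_or_lt with h0 | h0
    · have hz : ∀ v, g v = 0 := fun v => by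
        have := (Finset.sum_eq_zero_iff_of_nonneg fun v _ => sq_nonneg (g v)).1 h0.symm v (mem_univ v)
        simpa using this
      simp [← h0, energy, hz]
    · have hsq : (√S)⁻¹ ^ 2 = S⁻¹ := by rw [inv_pow, Real.sq_sqrt hS0]
      have hmem : (0 : V → ℝ) + (√S)⁻¹ • g ∈ K := by
        refine ⟨fun v hv => by simp [hg v hv], ?_⟩
        simp only [Pi.add_apply, Pi.zero_apply, zero_add, Pi.smul_apply, smul_eq_mul, mul_pow,
          ← Finset.mul_sum, hsq, ← hS]
        exact inv_mul_cancel₀ h0.ne'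
      have h1 : μ ≤ energy G ((0 : V → ℝ) + (√S)⁻¹ • g) := hmin hmem
      have h2 : energy G (0 : V → ℝ) = 0 := by simp [energy]
      have h3 : ∀ v, lapApply G (0 : V → ℝ) v = 0 := by simp [lapApply]
      rw [energy_add_smul, h2, hsq] at h1
      simp only [h3, mul_zero, Finset.sum_const_zero, zero_add] at h1
      rwa [inv_mul_eq_div, le_div_iff₀ h0] at h1
  have heig : ∀ g : V → ℝ, (∀ v, IsBoundary G v → g v = 0) →
      energy G g = μ * ∑ v, g v ^ 2 → ∀ v, IsInterior G v → lapApply G g v = μ * g v := by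
    intro g hg heq v hv
    -- first variation of `energy - μ ‖·‖²` in the direction of the vertex `v`
    have key : ∀ t : ℝ, 0 ≤ 2 * t * (lapApply G g v - μ * g v) +
        t ^ 2 * (energy G (Pi.single v 1) - μ) := by
      intro t
      have h1 := hlow (g + t • Pi.single v 1) (fun w hw => by
        have hne : w ≠ v := by
          rintro rfl
          unfold IsBoundary at hw
          unfold IsInterior at hv
          omega
        simp [hg w hw, Pi.single_eq_of_ne hne])
      rw [energy_add_smul, heq] at h1
      have h2 : ∑ w, (Pi.single v (1 : ℝ) : V → ℝ) w * lapApply G g w = lapApply G g v := by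
        simp [Pi.single_apply]
      have h3 : ∑ w, (g + t • (Pi.single v (1 : ℝ) : V → ℝ)) w ^ 2 =
          ∑ w, g w ^ 2 + 2 * t * g v + t ^ 2 := by
        have : ∀ w, (g + t • (Pi.single v (1 : ℝ) : V → ℝ)) w ^ 2 =
            g w ^ 2 + (if w = v then 2 * t * g v + t ^ 2 else 0) := by
          intro w
          by_cases hw : w = v
          · subst hw; simp; ring
          · simp [hw]
        simp_rw [this, Finset.sum_add_distrib]
        simp; ring
      rw [h2, h3] at h1
      linarith
    have := eq_zero_of_quadratic_nonneg key
    linarith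
  have hone : ∑ v, |g₀ v| ^ 2 = 1 := by simp only [sq_abs]; exact hg₀.2
  have habs0 : ∀ v, IsBoundary G v → |g₀ v| = 0 := fun v hv => by simp [hg₀.1 v hv]
  have habs : energy G (fun v => |g₀ v|) = μ * ∑ v, |g₀ v| ^ 2 := by
    apply le_antisymm
    · rw [hone, mul_one]; exact energy_abs_le G g₀
    · exact hlow (fun v => |g₀ v|) habs0
  have hpair : IsDirichletEigenpair G μ (fun v => |g₀ v|) := by
    refine ⟨fun h0 => ?_, habs0, heig _ habs0 habs⟩
    have : ∀ v, |g₀ v| = 0 := fun v => congrFun h0 v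
    simp [this] at hone
  have hlam : dirichletLambda G = μ := by
    refine IsLeast.csInf_eq ⟨⟨_, hpair⟩, ?_⟩
    rintro ν ⟨f, hf⟩
    have h1 := hlow f hf.2.1
    rw [energy_of_eigenpair hIB hf] at h1
    have hpos : 0 < ∑ v, f v ^ 2 := by
      obtain ⟨v, hv⟩ := Function.ne_iff.1 hf.1
      exact Finset.sum_pos' (fun _ _ => sq_nonneg _) ⟨v, mem_univ v, by
        have : f v ≠ 0 := hv
        positivity⟩
    exact le_of_mul_le_mul_right h1 hpos
  rw [hlam]
  exact ⟨⟨_, fun v => abs_nonneg _, hpair⟩, fun g hg => ⟨hlow g hg, heig g hg⟩⟩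

theorem isBoundary_or_isInterior (hG : IsTreeWithBoundary G) (v : V) :
    IsBoundary G v ∨ IsInterior G v := by
  obtain ⟨hT, ⟨a, ha⟩, ⟨b, hb⟩⟩ := hG
  unfold IsBoundary IsInterior at *
  have hne : a ≠ b := by rintro rfl; omega
  have : Nontrivial V := ⟨a, b, hne⟩
  have := hT.connected.preconnected.degree_pos_of_nontrivial v
  omega

theorem not_isBoundary_of_isInterior {v : V} (h : IsInterior G v) : ¬ IsBoundary G v := by
  unfold IsBoundary IsInterior at *
  omega

theorem dirichletLambda_pos (hG : IsTreeWithBoundary G) : 0 < dirichletLambda G := by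
  have hIB := isBoundary_or_isInterior hG
  obtain ⟨⟨f, hf0, hf⟩, -⟩ := exists_first_eigenfunction hIB hG.2.1
  have hE := energy_of_eigenpair hIB hf
  have hS : 0 < ∑ v, f v ^ 2 := by
    obtain ⟨v, hv⟩ := Function.ne_iff.1 hf.1
    exact Finset.sum_pos' (fun _ _ => sq_nonneg _) ⟨v, mem_univ v, by
      have : f v ≠ 0 := hv
      positivity⟩
  by_contra hneg
  have h2 := energy_eq_sum_sq G f
  have hnn : ∀ v ∈ univ, 0 ≤ ∑ w ∈ G.neighborFinset v, (f v - f w) ^ 2 :=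
    fun v _ => Finset.sum_nonneg fun _ _ => sq_nonneg _
  have hz : ∑ v, ∑ w ∈ G.neighborFinset v, (f v - f w) ^ 2 = 0 := by
    apply le_antisymm _ (Finset.sum_nonneg hnn)
    nlinarith
  have hconst : ∀ u v, G.Adj u v → f u = f v := by
    intro u v huv
    have h3 := (Finset.sum_eq_zero_iff_of_nonneg hnn).1 hz u (mem_univ u)
    have h4 := (Finset.sum_eq_zero_iff_of_nonneg fun w _ => sq_nonneg (f u - f w)).1 h3 v
      (by simpa using huv)
    nlinarith [pow_eq_zero_iff (two_ne_zero) |>.1 h4]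
  have hwalk : ∀ u v, G.Walk u v → f u = f v := by
    intro u v p
    induction p with
    | nil => rfl
    | cons h _ ih => rw [hconst _ _ h, ih]
  obtain ⟨b, hb⟩ := hG.2.2
  apply hf.1
  ext v
  obtain ⟨p⟩ := hG.1.connected v b
  rw [hwalk v b p, hf.2.1 b hb]
  rfl

/-- A nonnegative eigenfunction is positive in the interior. -/
theorem eigenfunction_pos (hG : IsTreeWithBoundary G) {μ : ℝ} {f : V → ℝ} (hf0 : ∀ v, 0 ≤ f v)
    (hf : IsDirichletEigenpair G μ f) (v : V) (hv : IsInterior G v) : 0 < f v := by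
  obtain ⟨r, hr⟩ := Function.ne_iff.1 hf.1
  have hr : f r ≠ 0 := hr
  have hrI : IsInterior G r := (isBoundary_or_isInterior hG r).resolve_left
    fun h => hr (hf.2.1 r h)
  obtain ⟨par, R⟩ := exists_rooted hG.1 r
  by_contra hneg
  have hv0 : f v = 0 := le_antisymm (not_lt.1 hneg) (hf0 v)
  -- zeros propagate from `v` towards the root through interior vertices
  have key : ∀ n, ∀ v, G.dist r v = n → IsInterior G v → f v = 0 → False := by
    intro n
    induction n using Nat.strong_induction_on with
    | _ n ih =>
      intro v hn hv hv0
      have hvr : v ≠ r := by rintro rfl; exact hr hv0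
      have hadj : G.Adj v (par v) := (R.adj_iff _ _).2 (Or.inl ⟨hvr, rfl⟩)
      have heq := hf.2.2 v hv
      rw [lapApply, hv0, mul_zero, mul_zero, zero_sub, neg_eq_zero] at heq
      have hp0 := (Finset.sum_eq_zero_iff_of_nonneg fun w _ => hf0 w).1 heq (par v)
        (by simpa using hadj)
      have hpr : par v ≠ r := fun h => hr (h ▸ hp0)
      have hpI : IsInterior G (par v) := by
        unfold IsInterior
        rw [R.degree_eq, if_neg hpr]
        have : 0 < #{c | c ≠ r ∧ par c = par v} :=
          Finset.card_pos.2 ⟨v, by simp [hvr]⟩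
        omega
      have := R.height v hvr
      exact ih (G.dist r (par v)) (by omega) (par v) rfl hpI hp0
  exact key _ v rfl hv hv0

end

/-! ### The greedy `d`-regular tree -/

theorem Rooted.isTree {V : Type*} [Fintype V] {G : SimpleGraph V} {r : V} {par : V → V}
    {h : V → ℕ} (R : Rooted G r par h) : G.IsTree := by
  have hreach : ∀ n, ∀ v, h v = n → G.Reachable v r := by
    intro n
    induction n using Nat.strong_induction_on with
    | _ n ih =>
      intro v hn
      by_cases hv : v = r
      · subst hv; exact SimpleGraph.Reachable.refl _
      · have hh := R.height v hv
        have hadj : G.Adj v (par v) := (R.adj_iff _ _).2 (Or.inl ⟨hv, rfl⟩)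
        exact hadj.reachable.trans (ih _ (by omega) (par v) rfl)
  have hconn : G.Connected :=
    { preconnected := fun u v => (hreach _ u rfl).trans (hreach _ v rfl).symm
      nonempty := ⟨r⟩ }
  rw [SimpleGraph.isTree_iff_connected_and_card]
  refine ⟨hconn, le_antisymm ?_ hconn.card_vert_le_card_edgeSet_add_one⟩
  have hsub : G.edgeFinset ⊆ (univ.erase r).image fun c => s(c, par c) := by
    intro e he
    induction e using Sym2.ind with
    | _ a b =>
      rw [SimpleGraph.mem_edgeFinset, SimpleGraph.mem_edgeSet, R.adj_iff] at he
      simp only [mem_image, mem_erase, mem_univ, and_true]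
      rcases he with ⟨ha, rfl⟩ | ⟨hb, rfl⟩
      · exact ⟨a, ha, rfl⟩
      · exact ⟨b, hb, Sym2.eq_swap⟩
  have h1 := (Finset.card_le_card hsub).trans Finset.card_image_le
  rw [Finset.card_erase_of_mem (mem_univ r), Finset.card_univ] at h1
  have h2 : Nat.card G.edgeSet = #G.edgeFinset := by
    rw [Nat.card_eq_fintype_card, SimpleGraph.edgeFinset_card]
  have h3 : 0 < Fintype.card V := Fintype.card_pos_iff.2 ⟨r⟩
  rw [h2, Nat.card_eq_fintype_card]
  omega

theorem Rooted.dist_par {V : Type*} {G : SimpleGraph V} {r : V} {par : V → V}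
    {h : V → ℕ} (R : Rooted G r par h) (hG : G.IsTree) (u : V) (hu : u ≠ r) :
    G.dist r u = G.dist r (par u) + 1 := by
  obtain ⟨par', R'⟩ := exists_rooted hG r
  suffices key : ∀ n, ∀ u, h u = n → u ≠ r → par' u = par u by
    rw [R'.height u hu, key _ u rfl hu]
  intro n
  induction n using Nat.strong_induction_on with
  | _ n ih =>
    intro u hn hu
    have hadj : G.Adj u (par u) := (R.adj_iff _ _).2 (Or.inl ⟨hu, rfl⟩)
    rcases (R'.adj_iff _ _).1 hadj with h1 | ⟨h1, h2⟩
    · exact h1.2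
    · exfalso
      have h3 := R.height u hu
      have h4 := R.height _ h1
      rw [ih (h (par u)) (by omega) (par u) rfl h1] at h2
      rw [h2] at h4
      omega

/-- The parent of the vertex `i ≥ 1` when vertices are numbered breadth first and every
interior vertex has degree `d`: the root `0` has the children `1, …, d`, and each further vertex
has `d - 1` children.  Truncated subtraction sends vertex `1` to the root as required. -/
def cpar (d i : ℕ) : ℕ := (i - 2) / (d - 1)

theorem cpar_lt {d i : ℕ} (hi : i ≠ 0) : cpar d i < i := by
  have : cpar d i ≤ i - 2 := Nat.div_le_self _ _
  omega

theorem cpar_mono {d i j : ℕ} (h : i ≤ j) : cpar d i ≤ cpar d j :=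
  Nat.div_le_div_right (by omega)

/-- Height of a vertex in the greedy tree. -/
def cht (d : ℕ) (i : ℕ) : ℕ := if h : i = 0 then 0 else cht d (cpar d i) + 1
termination_by i
decreasing_by exact cpar_lt h

/-- The greedy tree with `k` interior vertices `0, …, k - 1`, all of degree `d`, numbered
breadth first.  It has `k * (d - 1) + 2` vertices in total. -/
def canon (d k : ℕ) : SimpleGraph (Fin (k * (d - 1) + 2)) where
  Adj i j := (i.1 ≠ 0 ∧ cpar d i = j.1) ∨ (j.1 ≠ 0 ∧ cpar d j = i.1)
  symm := ⟨fun _ _ h => h.symm⟩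
  loopless := ⟨fun i h => by
    have : i.1 ≠ 0 ∧ cpar d i = i.1 := by tauto
    exact absurd this.2 (cpar_lt this.1).ne⟩

/-- The parent map of the greedy tree. -/
def cparFin (d k : ℕ) (i : Fin (k * (d - 1) + 2)) : Fin (k * (d - 1) + 2) :=
  ⟨cpar d i, lt_of_le_of_lt ((Nat.div_le_self _ _).trans (Nat.sub_le _ _)) i.2⟩

theorem canon_rooted (d k : ℕ) : Rooted (canon d k) 0 (cparFin d k) (fun i => cht d i) := by
  have h0 : ∀ u : Fin (k * (d - 1) + 2), u ≠ 0 ↔ u.1 ≠ 0 := fun u => by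
    rw [Ne, Fin.ext_iff]; rfl
  refine ⟨fun u v => ?_, fun u hu => ?_⟩
  · rw [h0, h0, Fin.ext_iff, Fin.ext_iff]
    rfl
  · rw [h0] at hu
    change cht d u = cht d (cpar d u) + 1
    rw [cht, dif_neg hu]

/-- A distinguished neighbour of the interior vertex `i` of the greedy tree: its parent, or the
first child in the case of the root.  With this choice the remaining neighbours of `i` are
`i * (d - 1) + 2, …, (i + 1) * (d - 1) + 1` for every `i`. -/
def upper (d i : ℕ) : ℕ := if i = 0 then 1 else cpar d i

theorem canon_sum_neighbor {M : Type*} [AddCommMonoid M] {d k : ℕ} (hd : 2 ≤ d) (B : ℕ → M)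
    (i : Fin (k * (d - 1) + 2)) (hi : i.1 < k) :
    ∑ w ∈ (canon d k).neighborFinset i, B w =
      B (upper d i) + ∑ t ∈ range (d - 1), B (i.1 * (d - 1) + 2 + t) := by
  rw [(canon_rooted d k).sum_neighbor (fun w => B w.1) i]
  obtain ⟨D, rfl⟩ : ∃ D, d = D + 2 := ⟨d - 2, by omega⟩
  have hle : (i.1 + 1) * (D + 1) ≤ k * (D + 1) := Nat.mul_le_mul_right _ hi
  have hexp : (i.1 + 1) * (D + 1) = i.1 * (D + 1) + (D + 1) := by ring
  have hmem : ∀ c, (c ≠ 0 ∧ cpar (D + 2) c = i.1) ↔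
      (c = 1 ∧ i.1 = 0) ∨ (i.1 * (D + 1) + 2 ≤ c ∧ c < i.1 * (D + 1) + 2 + (D + 1)) := by
    intro c
    change (c ≠ 0 ∧ (c - 2) / (D + 1) = i.1) ↔ _
    rw [Nat.div_eq_iff (by omega)]
    rcases Nat.eq_zero_or_pos i.1 with h | h
    · have : i.1 * (D + 1) = 0 := by rw [h, zero_mul]
      rw [this, Nat.zero_add, Nat.add_sub_cancel]
      omega
    · have : D + 1 ≤ i.1 * (D + 1) := Nat.le_mul_of_pos_left _ h
      omega
  have hset : (∑ c : Fin (k * (D + 2 - 1) + 2) with c ≠ 0 ∧ cparFin (D + 2) k c = i, B c.1) =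
      (if i.1 = 0 then B 1 else 0) +
        ∑ t ∈ range (D + 2 - 1), B (i.1 * (D + 2 - 1) + 2 + t) := by
    have h1 : (∑ c : Fin (k * (D + 2 - 1) + 2) with c ≠ 0 ∧ cparFin (D + 2) k c = i, B c.1) =
        ∑ c ∈ range (k * (D + 1) + 2) with (c ≠ 0 ∧ cpar (D + 2) c = i.1), B c := by
      rw [Finset.sum_filter, Finset.sum_filter,
        ← Fin.sum_univ_eq_sum_range (fun c => if c ≠ 0 ∧ cpar (D + 2) c = i.1 then B c else 0)]
      refine Finset.sum_congr rfl fun c _ => ?_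
      have h0 : c ≠ 0 ↔ c.1 ≠ 0 := by rw [Ne, Fin.ext_iff]; rfl
      have h2 : cparFin (D + 2) k c = i ↔ cpar (D + 2) c = i.1 := by rw [Fin.ext_iff]; rfl
      exact if_congr (and_congr h0 h2) rfl rfl
    have h2 : (∑ t ∈ range (D + 1), B (i.1 * (D + 1) + 2 + t)) =
        ∑ c ∈ Ico (i.1 * (D + 1) + 2) (i.1 * (D + 1) + 2 + (D + 1)), B c := by
      rw [Finset.sum_Ico_eq_sum_range, Nat.add_sub_cancel_left]
    rw [h1]
    change _ = _ + ∑ t ∈ range (D + 1), B (i.1 * (D + 1) + 2 + t)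
    rw [h2]
    by_cases h : i.1 = 0
    · rw [if_pos h, ← Finset.sum_insert (f := B) (a := 1) (by simp)]
      refine Finset.sum_congr ?_ fun _ _ => rfl
      ext c
      simp only [mem_filter, mem_range, hmem, mem_insert, mem_Ico]
      omega
    · rw [if_neg h, zero_add]
      refine Finset.sum_congr ?_ fun _ _ => rfl
      ext c
      simp only [mem_filter, mem_range, hmem, mem_Ico]
      omega
  rw [hset]
  unfold upper
  have h0 : i = 0 ↔ i.1 = 0 := by rw [Fin.ext_iff]; rfl
  by_cases h : i.1 = 0
  · rw [if_pos (h0.2 h), if_pos h, if_pos h, zero_add]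
  · rw [if_neg (fun h' => h (h0.1 h')), if_neg h, if_neg h, zero_add]
    rfl

theorem cpar_lt_of_lt {d k c : ℕ} (hd : 2 ≤ d) (hk : 1 ≤ k) (hc : c < k * (d - 1) + 2) :
    cpar d c < k := by
  unfold cpar
  rw [Nat.div_lt_iff_lt_mul (by omega)]
  have : 0 < k * (d - 1) := Nat.mul_pos hk (by omega)
  omega

theorem canon_degree_interior {d k : ℕ} (hd : 2 ≤ d)
    (i : Fin (k * (d - 1) + 2)) (hi : i.1 < k) : (canon d k).degree i = d := by
  have := canon_sum_neighbor hd (fun _ => (1 : ℕ)) i hi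
  simp at this
  omega

theorem canon_degree_boundary {d k : ℕ} (hd : 2 ≤ d) (hk : 1 ≤ k)
    (i : Fin (k * (d - 1) + 2)) (hi : k ≤ i.1) : (canon d k).degree i = 1 := by
  rw [(canon_rooted d k).degree_eq, if_neg, Finset.card_eq_zero.2]
  · rw [Finset.filter_eq_empty_iff]
    rintro c - ⟨-, hc⟩
    have h1 : cpar d c = i.1 := congrArg Fin.val hc
    have := cpar_lt_of_lt hd hk c.2
    omega
  · intro h
    have : i.1 = 0 := congrArg Fin.val h
    omega

theorem canon_isInterior {d k : ℕ} (hd : 2 ≤ d) (hk : 1 ≤ k) (i : Fin (k * (d - 1) + 2)) :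
    IsInterior (canon d k) i ↔ i.1 < k := by
  unfold IsInterior
  by_cases h : i.1 < k
  · simp [canon_degree_interior hd i h, h, hd]
  · simp [canon_degree_boundary hd hk i (by omega), h]

theorem canon_isBoundary {d k : ℕ} (hd : 2 ≤ d) (hk : 1 ≤ k) (i : Fin (k * (d - 1) + 2)) :
    IsBoundary (canon d k) i ↔ k ≤ i.1 := by
  unfold IsBoundary
  by_cases h : i.1 < k
  · rw [canon_degree_interior hd i h]
    omega
  · simp [canon_degree_boundary hd hk i (by omega), not_lt.1 h]

theorem le_canon_card {d k : ℕ} (hd : 2 ≤ d) : k + 1 < k * (d - 1) + 2 := by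
  have : k * 1 ≤ k * (d - 1) := Nat.mul_le_mul_left _ (by omega)
  omega

theorem canon_isTreeWithBoundary {d k : ℕ} (hd : 2 ≤ d) (hk : 1 ≤ k) :
    IsTreeWithBoundary (canon d k) := by
  refine ⟨(canon_rooted d k).isTree, ⟨0, ?_⟩, ⟨⟨k, ?_⟩, ?_⟩⟩
  · rw [canon_isInterior hd hk]; exact hk
  · have := le_canon_card (k := k) hd; omega
  · rw [canon_isBoundary hd hk]

theorem canon_inClass {d k : ℕ} (hd : 2 ≤ d) (hk : 1 ≤ k) :
    inClassTdInterior d k (canon d k) := by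
  refine ⟨canon_isTreeWithBoundary hd hk, ?_, fun v hv => ?_⟩
  · have h : interiorFinset (canon d k) =
        (range k).attach.image fun i => (⟨i.1, by
          have := mem_range.1 i.2
          have := le_canon_card (k := k) hd
          omega⟩ : Fin (k * (d - 1) + 2)) := by
      ext v
      simp only [interiorFinset, mem_filter, mem_univ, true_and, canon_isInterior hd hk, mem_image,
        mem_attach, Subtype.exists, mem_range]
      constructor
      · intro hv; exact ⟨v.1, hv, rfl⟩
      · rintro ⟨a, ha, rfl⟩; exact ha
    rw [h, Finset.card_image_of_injective, card_attach, card_range]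
    intro a b hab
    exact Subtype.ext (congrArg Fin.val hab)
  · rw [canon_degree_interior hd v ((canon_isInterior hd hk v).1 hv)]

theorem canon_dist_mono (d k : ℕ) (i j : Fin (k * (d - 1) + 2)) (h : i ≤ j) :
    (canon d k).dist 0 i ≤ (canon d k).dist 0 j := by
  have R := canon_rooted d k
  have key : ∀ n, ∀ i j : Fin (k * (d - 1) + 2), j.1 = n → i ≤ j →
      (canon d k).dist 0 i ≤ (canon d k).dist 0 j := by
    intro n
    induction n using Nat.strong_induction_on with
    | _ n ih =>
      intro i j hn hij
      by_cases hi : i = 0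
      · simp [hi]
      have hi' : i.1 ≠ 0 := fun h => hi (Fin.ext h)
      have hij' : i.1 ≤ j.1 := hij
      have hj' : j.1 ≠ 0 := by omega
      have hj : j ≠ 0 := fun h => hj' (congrArg Fin.val h)
      rw [R.dist_par R.isTree i hi, R.dist_par R.isTree j hj]
      have := ih (cpar d j) (by have := cpar_lt (d := d) hj'; omega)
        (cparFin d k i) (cparFin d k j) rfl (cpar_mono (d := d) hij')
      omega
  exact key _ i j rfl h

theorem canon_isSLOStarTree {d k : ℕ} (hd : 2 ≤ d) (hk : 1 ≤ k) :
    IsSLOStarTree (canon d k) := by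
  have R := canon_rooted d k
  have hchild : ∀ v w, IsChild (canon d k) 0 v w → cpar d w = v.1 := by
    rintro v w ⟨hadj, hdist⟩
    rcases (R.adj_iff _ _).1 hadj with ⟨h1, h2⟩ | ⟨h1, h2⟩
    · have := R.dist_par R.isTree v h1
      rw [h2] at this
      omega
    · exact congrArg Fin.val h2
  refine ⟨canon_isTreeWithBoundary hd hk, 0, (· < ·), ⟨inferInstance, ?_, ?_, ?_⟩, ?_⟩
  · exact fun v w h => canon_dist_mono d k v w h.le
  · intro v₁ v₂ w₁ w₂ hv h1 h2
    by_contra hlt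
    have hle : w₂.1 ≤ w₁.1 := not_lt.1 hlt
    have := cpar_mono (d := d) hle
    rw [hchild _ _ h1, hchild _ _ h2] at this
    exact absurd hv (not_lt.2 this)
  · intro v w h
    rw [canon_isBoundary hd hk, canon_isBoundary hd hk]
    intro hv
    exact hv.trans (le_of_lt h)
  · intro v w _ hv hw
    rw [canon_degree_interior hd v ((canon_isInterior hd hk v).1 hv),
      canon_degree_interior hd w ((canon_isInterior hd hk w).1 hw)]

/-- The vertices `1, …, (b + 1) * (d - 1) + 1` of the greedy tree all have their parent in
`0, …, b`; this counts those among them that are at most `a`. -/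
theorem canon_count {d k a b : ℕ} (hd : 2 ≤ d) (ha : a < k) :
    min a ((b + 1) * (d - 1) + 1) ≤
      #{c : Fin (k * (d - 1) + 2) | c ≠ 0 ∧ c.1 ≤ a ∧ (cparFin d k c).1 ≤ b} := by
  have hn := le_canon_card (k := k) hd
  set m := min a ((b + 1) * (d - 1) + 1) with hm
  have h : (univ : Finset (Fin m)).card ≤
      #{c : Fin (k * (d - 1) + 2) | c ≠ 0 ∧ c.1 ≤ a ∧ (cparFin d k c).1 ≤ b} := by
    refine Finset.card_le_card_of_injOn (fun i => ⟨i.1 + 1, by have := i.2; omega⟩) ?_ ?_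
    · intro i _
      have hi := i.2
      simp only [coe_filter, mem_univ, true_and, Set.mem_ofPred_eq]
      refine ⟨fun h => ?_, by omega, ?_⟩
      · have := congrArg Fin.val h
        simp at this
      · change (i.1 + 1 - 2) / (d - 1) ≤ b
        rw [← Nat.lt_succ_iff, Nat.div_lt_iff_lt_mul (by omega)]
        have : 0 < (b + 1) * (d - 1) := Nat.mul_pos (by omega) (by omega)
        simp only [Nat.succ_eq_add_one]
        omega
    · intro i _ j _ hij
      have := congrArg Fin.val hij
      simp only at this
      exact Fin.ext (by omega)
  simpa using h

/-! ### Invariance under isomorphism -/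

section
variable {V W : Type*} [Fintype V] [DecidableEq V] [Fintype W] [DecidableEq W]
  {G : SimpleGraph V} {H : SimpleGraph W}

theorem iso_sum_neighbor {M : Type*} [AddCommMonoid M] (e : G ≃g H) (B : W → M) (v : V) :
    ∑ w ∈ H.neighborFinset (e v), B w = ∑ w ∈ G.neighborFinset v, B (e w) := by
  symm
  refine Finset.sum_equiv e.toEquiv (fun w => ?_) fun _ _ => rfl
  simp only [SimpleGraph.mem_neighborFinset]
  exact e.map_rel_iff.symm

theorem iso_degree (e : G ≃g H) (v : V) : H.degree (e v) = G.degree v := by simp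

theorem iso_eigenpair (e : G ≃g H) {μ : ℝ} {f : W → ℝ} (hf : IsDirichletEigenpair H μ f) :
    IsDirichletEigenpair G μ (fun v => f (e v)) := by
  refine ⟨fun h => hf.1 ?_, fun v hv => hf.2.1 _ ?_, fun v hv => ?_⟩
  · funext w
    have := congrFun h (e.symm w)
    simpa using this
  · unfold IsBoundary at *
    rwa [iso_degree]
  · have := hf.2.2 (e v) (by unfold IsInterior at *; rwa [iso_degree])
    unfold lapApply at *
    rwa [iso_degree, iso_sum_neighbor] at this

theorem iso_dirichletLambda (e : G ≃g H) : dirichletLambda G = dirichletLambda H := by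
  unfold dirichletLambda
  congr 1
  ext μ
  exact ⟨fun ⟨f, hf⟩ => ⟨_, iso_eigenpair e.symm hf⟩, fun ⟨f, hf⟩ => ⟨_, iso_eigenpair e hf⟩⟩

theorem iso_dist (hG : G.Connected) (hH : H.Connected) (e : G ≃g H) (u v : V) :
    H.dist (e u) (e v) = G.dist u v := by
  apply le_antisymm
  · obtain ⟨p, hp⟩ := hG.exists_walk_length_eq_dist u v
    rw [← hp, ← SimpleGraph.Walk.length_map e.toHom p]
    exact SimpleGraph.dist_le (p.map e.toHom)
  · obtain ⟨p, hp⟩ := hH.exists_walk_length_eq_dist (e u) (e v)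
    rw [← hp]
    have h := SimpleGraph.dist_le (p.map e.symm.toHom)
    rw [SimpleGraph.Walk.length_map] at h
    have hs : ∀ x, e.symm.toHom (e x) = x := fun x => e.symm_apply_apply x
    rwa [hs, hs] at h

theorem iso_isSLOStarTree (e : G ≃g H) (hG : IsTreeWithBoundary G) (hH : IsSLOStarTree H) :
    IsSLOStarTree G := by
  obtain ⟨hT, w₀, lt, ⟨hlt, h1, h2, h3⟩, h4⟩ := hH
  have hd : ∀ v, G.dist (e.symm w₀) v = H.dist w₀ (e v) := fun v => by
    rw [← iso_dist hG.1.connected hT.1.connected e, e.apply_symm_apply]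
  have hB : ∀ v, IsBoundary G v ↔ IsBoundary H (e v) := fun v => by
    unfold IsBoundary; rw [iso_degree]
  have hI : ∀ v, IsInterior G v ↔ IsInterior H (e v) := fun v => by
    unfold IsInterior; rw [iso_degree]
  have hC : ∀ v w, IsChild G (e.symm w₀) v w ↔ IsChild H w₀ (e v) (e w) := fun v w => by
    unfold IsChild
    rw [hd, hd]
    exact and_congr e.map_rel_iff.symm Iff.rfl
  refine ⟨hG, e.symm w₀, fun a b => lt (e a) (e b), ⟨?_, ?_, ?_, ?_⟩, ?_⟩
  · exact RelEmbedding.isStrictTotalOrder (s := lt)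
      (⟨e.toEquiv.toEmbedding, Iff.rfl⟩ : (fun a b => lt (e a) (e b)) ↪r lt)
  · intro v w h
    rw [hd, hd]
    exact h1 _ _ h
  · intro v₁ v₂ u₁ u₂ h c1 c2
    exact h2 _ _ _ _ h ((hC _ _).1 c1) ((hC _ _).1 c2)
  · intro v w h b
    exact (hB w).2 (h3 _ _ h ((hB v).1 b))
  · intro v w h a b
    rw [← iso_degree e, ← iso_degree e]
    exact h4 _ _ h ((hI v).1 a) ((hI w).1 b)

end

/-! ### Spiral-like orderings with constant degree -/

section
variable {V : Type*} [Fintype V] [DecidableEq V] {G : SimpleGraph V}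

theorem Rooted.card_children {r : V} {par : V → V} {h : V → ℕ} (R : Rooted G r par h)
    (S : Finset V) (hr : r ∈ S) :
    #{c | c ≠ r ∧ par c ∈ S} + #S = ∑ v ∈ S, G.degree v + 1 := by
  have h1 : #{c | c ≠ r ∧ par c ∈ S} = ∑ v ∈ S, #{c | c ≠ r ∧ par c = v} := by
    rw [Finset.card_eq_sum_card_fiberwise (f := par) (t := S)]
    · refine Finset.sum_congr rfl fun v hv => ?_
      rw [Finset.filter_filter]
      congr 1
      ext c
      simp only [mem_filter, mem_univ, true_and]
      constructor
      · rintro ⟨⟨a, -⟩, b⟩; exact ⟨a, b⟩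
      · rintro ⟨a, rfl⟩; exact ⟨⟨a, hv⟩, rfl⟩
    · intro c hc
      simp only [coe_filter, mem_univ, true_and, Set.mem_ofPred_eq] at hc
      exact hc.2
  have h2 : ∑ v ∈ S, (if v = r then 0 else 1) + 1 = #S := by
    rw [Finset.card_eq_sum_ones, ← Finset.add_sum_erase S _ hr, ← Finset.add_sum_erase S _ hr,
      if_pos rfl, zero_add, add_comm]
    congr 1
    exact Finset.sum_congr rfl fun v hv => if_neg (Finset.ne_of_mem_erase hv)
  simp_rw [R.degree_eq]
  rw [Finset.sum_add_distrib, h1, ← h2]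
  ring

theorem card_of_regular {d k : ℕ} (hd : 2 ≤ d) (hG : inClassTdInterior d k G)
    (hreg : ∀ v, IsInterior G v → G.degree v = d) : Fintype.card V = k * (d - 1) + 2 := by
  obtain ⟨hT, hk, -⟩ := hG
  obtain ⟨r, -⟩ := hT.2.1
  obtain ⟨par, R⟩ := exists_rooted hT.1 r
  have h1 := R.card_children univ (mem_univ r)
  have h2 : #{c | c ≠ r ∧ par c ∈ (univ : Finset V)} + 1 = Fintype.card V := by
    have : (univ.filter fun c => c ≠ r ∧ par c ∈ (univ : Finset V)) = univ.erase r := by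
      ext c; simp
    rw [this, Finset.card_erase_add_one (mem_univ r), Finset.card_univ]
  have h3 : ∑ v, G.degree v = ∑ v, (1 + if IsInterior G v then d - 1 else 0) := by
    refine Finset.sum_congr rfl fun v _ => ?_
    rcases isBoundary_or_isInterior hT v with hv | hv
    · rw [if_neg (fun h => not_isBoundary_of_isInterior h hv)]
      exact hv
    · rw [if_pos hv, hreg v hv]
      omega
  rw [Finset.sum_add_distrib, ← Finset.sum_filter] at h3
  have h4 : univ.filter (fun v => IsInterior G v) = interiorFinset G := rfl
  rw [h4] at h3
  simp only [sum_const, hk, card_univ, smul_eq_mul, mul_one] at h3 h1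
  omega

theorem mem_iff_lt_of_isLower {n m : ℕ} {S : Finset (Fin n)} (hS : ∀ i j, i ≤ j → j ∈ S → i ∈ S)
    (hm : #S = m) (i : Fin n) : i ∈ S ↔ i.1 < m := by
  constructor
  · intro hi
    have h : Finset.Iic i ⊆ S := fun j hj => hS j i (Finset.mem_Iic.1 hj) hi
    have := Finset.card_le_card h
    rw [Fin.card_Iic] at this
    omega
  · intro hi
    by_contra hn
    have h : S ⊆ Finset.Iio i := fun j hj => by
      rw [Finset.mem_Iio]
      by_contra hlt
      exact hn (hS i j (not_lt.1 hlt) hj)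
    have := Finset.card_le_card h
    rw [Fin.card_Iio] at this
    omega

theorem exists_enumeration {n : ℕ} (hn : Fintype.card V = n) {lt : V → V → Prop}
    (hlt : IsStrictTotalOrder V lt) :
    ∃ σ : Fin n ≃ V, ∀ i j, i < j ↔ lt (σ i) (σ j) := by
  let _ : LinearOrder V := linearOrderOfSTO lt
  let e := Fintype.orderIsoFinOfCardEq V hn
  exact ⟨e.toEquiv, fun i j => (e.lt_iff_lt (x := i) (y := j)).symm⟩

/-- An SLO*-tree with `k` interior vertices of degree `d` is the greedy tree: in the order of the
SLO*-ordering the interior vertices come first, and parents are non-decreasing, so the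
number of children determines every parent. -/
theorem iso_canon_of_isSLOStarTree {d k : ℕ} (hd : 2 ≤ d) (hk : 1 ≤ k)
    (hG : inClassTdInterior d k G) (hreg : ∀ v, IsInterior G v → G.degree v = d)
    (hS : IsSLOStarTree G) : Nonempty (G ≃g canon d k) := by
  obtain ⟨hT, r, lt, ⟨hlt, S1, S2, S3⟩, -⟩ := hS
  obtain ⟨par, R⟩ := exists_rooted hT.1 r
  obtain ⟨σ, hσ⟩ := exists_enumeration (card_of_regular hd hG hreg) hlt
  have h0 : σ 0 = r := by
    by_contra hne
    have h1 : (0 : Fin (k * (d - 1) + 2)) < σ.symm r := by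
      rw [Fin.pos_iff_ne_zero]
      intro h
      exact hne (by rw [← h, σ.apply_symm_apply])
    rw [hσ, σ.apply_symm_apply] at h1
    have h2 := S1 _ _ h1
    rw [SimpleGraph.dist_self, Nat.le_zero] at h2
    exact hne ((hT.1.connected.dist_eq_zero_iff).1 h2).symm
  have hne0 : ∀ i, i ≠ 0 ↔ σ i ≠ r := fun i => by rw [← h0, σ.injective.ne_iff]
  have h_interior : ∀ i, IsInterior G (σ i) ↔ i.1 < k := by
    intro i
    have hc : #(univ.filter fun i => IsInterior G (σ i)) = k := by
      refine Eq.trans ?_ hG.2.1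
      refine Finset.card_equiv σ fun i => ?_
      simp [interiorFinset]
    rw [← mem_iff_lt_of_isLower (S := univ.filter fun i => IsInterior G (σ i)) ?_ hc]
    · simp
    · intro i j hij hj
      simp only [mem_filter, mem_univ, true_and] at hj ⊢
      rcases hij.eq_or_lt with rfl | hij
      · exact hj
      · refine (isBoundary_or_isInterior hT _).resolve_left fun hb => ?_
        exact not_isBoundary_of_isInterior hj (S3 _ _ ((hσ i j).1 hij) hb)
  set p : Fin (k * (d - 1) + 2) → Fin (k * (d - 1) + 2) := fun i => σ.symm (par (σ i)) with hp
  have hσp : ∀ i, σ (p i) = par (σ i) := fun i => σ.apply_symm_apply _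
  have hchild : ∀ i, i ≠ 0 → IsChild G r (σ (p i)) (σ i) := by
    intro i hi
    rw [hne0] at hi
    rw [hσp]
    exact ⟨(R.adj_iff _ _).2 (Or.inr ⟨hi, rfl⟩), R.height _ hi⟩
  have hmono : ∀ i j, i ≠ 0 → i ≤ j → p i ≤ p j := by
    intro i j hi hij
    by_contra hlt'
    have hj : j ≠ 0 := fun h => hi (Fin.le_zero_iff.1 (h ▸ hij))
    have h1 := S2 _ _ _ _ ((hσ _ _).1 (not_le.1 hlt')) (hchild j hj) (hchild i hi)
    rw [← hσ] at h1
    exact absurd h1 (not_lt.2 hij)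
  have hcount : ∀ b, b < k → ∀ c : Fin (k * (d - 1) + 2), (c = 0 ∨ (p c).1 ≤ b) ↔
      c.1 < (b + 1) * (d - 1) + 2 := by
    intro b hb c
    rw [← mem_iff_lt_of_isLower (S := univ.filter fun c => c = 0 ∨ (p c).1 ≤ b)]
    · simp
    · intro i j hij hj
      simp only [mem_filter, mem_univ, true_and] at hj ⊢
      by_cases hi : i = 0
      · exact Or.inl hi
      right
      have hj0 : j ≠ 0 := fun h => hi (Fin.le_zero_iff.1 (h ▸ hij))
      have h2 : (p i).1 ≤ (p j).1 := hmono i j hi hij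
      exact h2.trans (hj.resolve_left hj0)
    · set B : Finset (Fin (k * (d - 1) + 2)) := univ.filter fun i => i.1 ≤ b with hB
      have hBc : #B = b + 1 := by
        have hbn : b < k * (d - 1) + 2 := by
          have := le_canon_card (k := k) hd
          omega
        have : B = Finset.Iic ⟨b, hbn⟩ := by
          ext i; simp [hB, Fin.le_def]
        rw [this, Fin.card_Iic]
      have hr : r ∈ B.map σ.toEmbedding := by
        rw [Finset.mem_map_equiv, ← h0, σ.symm_apply_apply]
        simp [hB]
      have h1 := R.card_children (B.map σ.toEmbedding) hr
      have h2 : ∑ v ∈ B.map σ.toEmbedding, G.degree v = (b + 1) * d := by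
        rw [Finset.sum_map, Finset.sum_congr rfl (g := fun _ => d), Finset.sum_const, hBc,
          smul_eq_mul]
        intro i hi
        refine hreg _ ((h_interior i).2 ?_)
        simp only [hB, mem_filter, mem_univ, true_and] at hi
        omega
      have h3 : #{c | c ≠ r ∧ par c ∈ B.map σ.toEmbedding} =
          #(univ.filter fun c => c ≠ 0 ∧ (p c).1 ≤ b) := by
        symm
        refine Finset.card_equiv σ fun i => ?_
        simp only [mem_filter, mem_univ, true_and, Finset.mem_map_equiv, hne0, hB, hp]
      have h4 : (univ.filter fun c => c = 0 ∨ (p c).1 ≤ b) =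
          insert 0 (univ.filter fun c => c ≠ 0 ∧ (p c).1 ≤ b) := by
        ext c
        simp only [mem_filter, mem_univ, true_and, mem_insert]
        tauto
      rw [h4, Finset.card_insert_of_notMem (by simp), ← h3]
      rw [Finset.card_map, hBc, h2] at h1
      obtain ⟨D, rfl⟩ : ∃ D, d = D + 2 := ⟨d - 2, by omega⟩
      simp only [Nat.add_one_sub_one] at *
      have : (b + 1) * (D + 2) = (b + 1) * (D + 1) + (b + 1) := by ring
      omega
  have hcp : ∀ b, ∀ c : Fin (k * (d - 1) + 2), c ≠ 0 →
      (cpar d c ≤ b ↔ c.1 < (b + 1) * (d - 1) + 2) := by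
    intro b c hc
    have hc' : c.1 ≠ 0 := fun h => hc (Fin.ext h)
    unfold cpar
    rw [← Nat.lt_succ_iff, Nat.div_lt_iff_lt_mul (by omega)]
    have : 0 < (b + 1) * (d - 1) := Nat.mul_pos (by omega) (by omega)
    simp only [Nat.succ_eq_add_one]
    omega
  have hpc : ∀ c, c ≠ 0 → p c = cparFin d k c := by
    intro c hc
    have key : ∀ b, b < k → ((p c).1 ≤ b ↔ cpar d c ≤ b) := by
      intro b hb
      rw [hcp b c hc, ← hcount b hb c]
      simp [hc]
    have h1 : cpar d c < k := cpar_lt_of_lt hd hk c.2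
    have h2 := (key _ h1).2 le_rfl
    have h3 := (key (p c).1 (by omega)).1 le_rfl
    exact Fin.ext (le_antisymm h2 h3)
  refine R.nonempty_iso (canon_rooted d k) σ σ.bijective h0 fun w hw => ?_
  rw [← hpc w hw, hσp]

end

/-! ### Ranking the interior vertices by the eigenfunction -/

section
variable {V : Type*} [Fintype V] [DecidableEq V] {G : SimpleGraph V}

/-- `φ 0 ≥ φ 1 ≥ … ≥ φ (k - 1) > 0 = φ k = …` lists the values of `f` on the interior vertices, and
`e` maps each interior vertex to its position in this list; boundary vertices get positions
`≥ k`, where `φ` vanishes. -/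
structure Ranking (G : SimpleGraph V) (k : ℕ) (f : V → ℝ) (e : V → ℕ) (φ : ℕ → ℝ) : Prop where
  lt_iff : ∀ v, e v < k ↔ IsInterior G v
  inj : ∀ u v, e u < k → e u = e v → u = v
  surj : ∀ i, i < k → ∃ v, e v = i
  apply : ∀ v, f v = φ (e v)
  anti : Antitone φ
  pos : ∀ i, i < k → 0 < φ i
  zero : ∀ i, k ≤ i → φ i = 0

theorem exists_ranking {k : ℕ} (hk : (interiorFinset G).card = k) {f : V → ℝ}
    (hpos : ∀ v, IsInterior G v → 0 < f v) (hzero : ∀ v, ¬ IsInterior G v → f v = 0) :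
    ∃ e φ, Ranking G k f e φ := by
  have hcard : Fintype.card {v // IsInterior G v} = k := by
    rw [← hk, Fintype.card_subtype]; rfl
  let ι₀ : Fin k ≃ {v // IsInterior G v} := (Fintype.equivFinOfCardEq hcard).symm
  let τ := Tuple.sort fun i => - f (ι₀ i).1
  let ι : Fin k ≃ {v // IsInterior G v} := τ.trans ι₀
  have hι : ∀ i j, i ≤ j → f (ι j).1 ≤ f (ι i).1 := by
    intro i j hij
    have h := Tuple.monotone_sort (fun i => - f (ι₀ i).1) hij
    exact neg_le_neg_iff.1 h
  refine ⟨fun v => if h : IsInterior G v then (ι.symm ⟨v, h⟩).1 else k,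
    fun i => if h : i < k then f (ι ⟨i, h⟩).1 else 0, ?_, ?_, ?_, ?_, ?_, ?_, ?_⟩
  · intro v
    by_cases h : IsInterior G v <;> simp [h]
  · intro u v
    by_cases h : IsInterior G u <;> by_cases h' : IsInterior G v
    · simp only [h, h', dif_pos]
      intro _ heq
      have := ι.symm.injective (Fin.ext heq)
      exact congrArg Subtype.val this
    · simp only [h, h', dif_pos, dif_neg, not_false_eq_true]
      intro h1 h2
      omega
    · simp [h]
    · simp [h]
  · intro i hi
    refine ⟨(ι ⟨i, hi⟩).1, ?_⟩
    simp [(ι ⟨i, hi⟩).2]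
  · intro v
    by_cases h : IsInterior G v
    · simp [h]
    · simp [h, hzero v h]
  · intro i j hij
    dsimp only
    by_cases hj : j < k
    · rw [dif_pos hj, dif_pos (lt_of_le_of_lt hij hj)]
      exact hι _ _ hij
    · rw [dif_neg hj]
      split_ifs with hi
      · exact (hpos _ (ι ⟨i, hi⟩).2).le
      · exact le_rfl
  · intro i hi
    rw [dif_pos hi]
    exact hpos _ (ι ⟨i, hi⟩).2
  · intro i hi
    rw [dif_neg (not_lt.2 hi)]

namespace Ranking
variable {k : ℕ} {f : V → ℝ} {e : V → ℕ} {φ : ℕ → ℝ}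

theorem image_le (K : Ranking G k f e φ) {m : ℕ} (hm : m ≤ k) :
    (univ.filter fun v => e v < m).image e = range m := by
  ext i
  simp only [mem_image, mem_filter, mem_univ, true_and, mem_range]
  constructor
  · rintro ⟨v, hv, rfl⟩; exact hv
  · intro hi
    obtain ⟨v, rfl⟩ := K.surj i (by omega)
    exact ⟨v, hi, rfl⟩

theorem sum_lt (K : Ranking G k f e φ) {m : ℕ} (hm : m ≤ k) {M : Type*} [AddCommMonoid M]
    (F : ℕ → M) : ∑ v with e v < m, F (e v) = ∑ i ∈ range m, F i := by
  rw [← K.image_le hm, Finset.sum_image]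
  intro u hu v hv huv
  simp only [coe_filter, mem_univ, true_and, Set.mem_ofPred_eq] at hu
  exact K.inj u v (by omega) huv

theorem sum_univ (K : Ranking G k f e φ) (F : ℕ → ℝ) (hF : ∀ i, k ≤ i → F i = 0) :
    ∑ v, F (e v) = ∑ i ∈ range k, F i := by
  rw [← K.sum_lt le_rfl F, Finset.sum_filter]
  refine Finset.sum_congr rfl fun v _ => ?_
  split_ifs with h
  · rfl
  · exact hF _ (not_lt.1 h)

theorem nonneg (K : Ranking G k f e φ) (i : ℕ) : 0 ≤ φ i := by
  by_cases h : i < k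
  · exact (K.pos i h).le
  · exact (K.zero i (not_lt.1 h)).ge

end Ranking

end

/-! ### Summation by parts -/

theorem abel_single {k : ℕ} {g : ℕ → ℝ} (hg : ∀ i, k ≤ i → g i = 0) (x : ℕ) :
    g x = ∑ a ∈ range k, if x ≤ a then g a - g (a + 1) else 0 := by
  have hset : (range k).filter (fun a => x ≤ a) = Ico x k := by
    ext a; simp only [mem_filter, mem_range, mem_Ico]; omega
  rw [← Finset.sum_filter, hset]
  by_cases hx : k ≤ x
  · rw [Finset.Ico_eq_empty_of_le hx, hg x hx, Finset.sum_empty]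
  · rw [Finset.sum_Ico_eq_sum_range]
    have := Finset.sum_range_sub' (fun j => g (x + j)) (k - x)
    rw [show x + (k - x) = k by omega, hg k le_rfl, sub_zero] at this
    exact this.symm

theorem abel_double {k : ℕ} {g g' : ℕ → ℝ} (hg : ∀ i, k ≤ i → g i = 0)
    (hg' : ∀ i, k ≤ i → g' i = 0) {ι : Type*} (S : Finset ι) (x y : ι → ℕ) :
    ∑ c ∈ S, g (x c) * g' (y c) = ∑ a ∈ range k, ∑ b ∈ range k,
      (g a - g (a + 1)) * (g' b - g' (b + 1)) * #{c ∈ S | x c ≤ a ∧ y c ≤ b} := by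
  have h1 : ∀ c ∈ S, g (x c) * g' (y c) = ∑ a ∈ range k, ∑ b ∈ range k,
      if x c ≤ a ∧ y c ≤ b then (g a - g (a + 1)) * (g' b - g' (b + 1)) else 0 := by
    intro c _
    rw [abel_single hg (x c), abel_single hg' (y c), Finset.sum_mul_sum]
    refine Finset.sum_congr rfl fun a _ => Finset.sum_congr rfl fun b _ => ?_
    by_cases h1 : x c ≤ a <;> by_cases h2 : y c ≤ b <;> simp [h1, h2]
  rw [Finset.sum_congr rfl h1, Finset.sum_comm]
  refine Finset.sum_congr rfl fun a _ => ?_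
  rw [Finset.sum_comm]
  refine Finset.sum_congr rfl fun b _ => ?_
  rw [← Finset.sum_filter, Finset.sum_const, nsmul_eq_mul, mul_comm]

/-! ### Comparison with the greedy tree -/

section
variable {V : Type*} [Fintype V] [DecidableEq V] {G : SimpleGraph V}

/-- The number of edges `{c, par c}` whose lower end is ranked at most `a` and whose upper end is
ranked at most `b`. -/
def edgeCount (r : V) (par : V → V) (e : V → ℕ) (a b : ℕ) : ℕ :=
  #{c ∈ univ.filter (fun c => c ≠ r) | e c ≤ a ∧ e (par c) ≤ b}

/-- Total amount by which the degrees of the vertices ranked at most `b` exceed `d`. -/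
def excess (G : SimpleGraph V) (d : ℕ) (e : V → ℕ) (b : ℕ) : ℝ :=
  ∑ v with e v ≤ b, ((G.degree v : ℝ) - d)

section
variable {d k : ℕ} {f : V → ℝ} {e : V → ℕ} {φ : ℕ → ℝ} {r : V} {par : V → V} {h : V → ℕ}

theorem edgeCount_le_left (K : Ranking G k f e φ) (hr : e r = 0) {a b : ℕ} (ha : a < k) :
    edgeCount r par e a b ≤ a := by
  have h1 : edgeCount r par e a b ≤ #(Icc 1 a) := by
    refine Finset.card_le_card_of_injOn e ?_ ?_
    · intro c hc
      simp only [coe_filter, mem_filter, mem_univ, true_and, Set.mem_ofPred_eq] at hc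
      simp only [coe_Icc, Set.mem_Icc]
      refine ⟨Nat.one_le_iff_ne_zero.2 fun h0 => hc.1 ?_, hc.2.1⟩
      exact K.inj c r (by omega) (by omega)
    · intro c hc c' _ heq
      simp only [coe_filter, mem_filter, mem_univ, true_and, Set.mem_ofPred_eq] at hc
      exact K.inj c c' (by omega) heq
  simpa using h1

theorem card_le_rank (K : Ranking G k f e φ) {b : ℕ} (hb : b < k) :
    #(univ.filter fun v => e v ≤ b) = b + 1 := by
  have := K.sum_lt (m := b + 1) hb (fun _ => (1 : ℕ))
  simpa [Nat.lt_succ_iff] using this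

theorem edgeCount_le_right (K : Ranking G k f e φ) (R : Rooted G r par h) (hd : 2 ≤ d)
    (hr : e r = 0) {a b : ℕ} (hb : b < k) :
    (edgeCount r par e a b : ℝ) ≤ (((b + 1) * (d - 1) + 1 : ℕ) : ℝ) + excess G d e b := by
  have h1 := R.card_children (univ.filter fun v => e v ≤ b) (by simp [hr])
  have h2 : edgeCount r par e a b ≤
      #{c | c ≠ r ∧ par c ∈ univ.filter fun v => e v ≤ b} := by
    refine Finset.card_le_card fun c hc => ?_
    simp only [mem_filter, mem_univ, true_and] at hc ⊢
    exact ⟨hc.1, hc.2.2⟩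
  rw [card_le_rank K hb] at h1
  have h3 : (edgeCount r par e a b : ℝ) + (b + 1) ≤ ∑ v with e v ≤ b, (G.degree v : ℝ) + 1 := by
    have : edgeCount r par e a b + (b + 1) ≤ ∑ v with e v ≤ b, G.degree v + 1 := by omega
    exact_mod_cast this
  unfold excess
  rw [Finset.sum_sub_distrib, Finset.sum_const, card_le_rank K hb]
  obtain ⟨D, rfl⟩ : ∃ D, d = D + 2 := ⟨d - 2, by omega⟩
  push_cast
  simp only [nsmul_eq_mul]
  push_cast
  linarith

theorem excess_nonneg (K : Ranking G k f e φ) (hdeg : ∀ v, IsInterior G v → d ≤ G.degree v)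
    {b : ℕ} (hb : b < k) : 0 ≤ excess G d e b := by
  refine Finset.sum_nonneg fun v hv => ?_
  simp only [mem_filter, mem_univ, true_and] at hv
  have := hdeg v ((K.lt_iff v).1 (by omega))
  have : (d : ℝ) ≤ G.degree v := by exact_mod_cast this
  linarith

/-- For each pair of thresholds the greedy tree has as many edges as any tree can have, up to the
excess of the degrees over `d`. -/
theorem edgeCount_le (K : Ranking G k f e φ) (R : Rooted G r par h) (hd : 2 ≤ d) (hr : e r = 0)
    (hdeg : ∀ v, IsInterior G v → d ≤ G.degree v) {a b : ℕ} (ha : a < k) (hb : b < k) :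
    (edgeCount r par e a b : ℝ) ≤
      edgeCount 0 (cparFin d k) Fin.val a b + if b < a then excess G d e b else 0 := by
  have h1 : (edgeCount r par e a b : ℝ) ≤ a := by exact_mod_cast edgeCount_le_left K hr ha
  have h2 := edgeCount_le_right (a := a) K R hd hr hb
  have h3 := excess_nonneg K hdeg hb
  have h4 : min a ((b + 1) * (d - 1) + 1) ≤ edgeCount 0 (cparFin d k) Fin.val a b := by
    refine (canon_count (b := b) hd ha).trans (Finset.card_le_card fun c hc => ?_)
    simpa only [mem_filter, mem_univ, true_and] using hc
  have h5 : ((min a ((b + 1) * (d - 1) + 1) : ℕ) : ℝ) ≤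
      edgeCount 0 (cparFin d k) Fin.val a b := by exact_mod_cast h4
  have h6 : b + 1 ≤ (b + 1) * (d - 1) := Nat.le_mul_of_pos_right _ (by omega)
  by_cases hab : b < a
  · rw [if_pos hab]
    rcases min_choice a ((b + 1) * (d - 1) + 1) with h7 | h7 <;> rw [h7] at h5 <;> linarith
  · rw [if_neg hab]
    rw [min_eq_left (by omega)] at h5
    linarith

theorem sum_edges_eq {g g' : ℕ → ℝ} (hg : ∀ i, k ≤ i → g i = 0) (hg' : ∀ i, k ≤ i → g' i = 0)
    (r : V) (par : V → V) (e : V → ℕ) :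
    ∑ c with c ≠ r, g (e c) * g' (e (par c)) = ∑ a ∈ range k, ∑ b ∈ range k,
      (g a - g (a + 1)) * (g' b - g' (b + 1)) * edgeCount r par e a b :=
  abel_double hg hg' _ e fun c => e (par c)

theorem energy_eq_edgeCount (R : Rooted G r par h) (hzero : ∀ i, k ≤ i → φ i = 0)
    (hf : ∀ v, f v = φ (e v)) :
    energy G f = ∑ v, (G.degree v : ℝ) * f v ^ 2 - 2 * ∑ a ∈ range k, ∑ b ∈ range k,
      (φ a - φ (a + 1)) * (φ b - φ (b + 1)) * edgeCount r par e a b := by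
  rw [energy_eq, ← sum_edges_eq hzero hzero r par e, R.sum_adj, Finset.mul_sum]
  congr 1
  refine Finset.sum_congr rfl fun c _ => ?_
  rw [hf, hf]
  ring

theorem sum_canon {k : ℕ} (hd : 2 ≤ d) (F : ℕ → ℝ) (hF : ∀ i, k ≤ i → F i = 0) :
    ∑ i : Fin (k * (d - 1) + 2), F i = ∑ i ∈ range k, F i := by
  have hn := le_canon_card (k := k) hd
  rw [Fin.sum_univ_eq_sum_range]
  symm
  refine Finset.sum_subset (Finset.range_subset_range.2 (by omega)) fun i _ hi => hF i ?_
  simpa using hi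

theorem sum_degree_canon (hd : 2 ≤ d) (F : ℕ → ℝ) (hF : ∀ i, k ≤ i → F i = 0) :
    ∑ i : Fin (k * (d - 1) + 2), ((canon d k).degree i : ℝ) * F i =
      d * ∑ i ∈ range k, F i := by
  rw [← sum_canon hd F hF, Finset.mul_sum]
  refine Finset.sum_congr rfl fun i _ => ?_
  by_cases hi : i.1 < k
  · rw [canon_degree_interior hd i hi]
  · rw [hF _ (not_lt.1 hi), mul_zero, mul_zero]

/-- The weight with which a unit of excess degree at a vertex of rank `j` enters the
lower bound for the energy. -/
def kappa (k : ℕ) (φ : ℕ → ℝ) (j : ℕ) : ℝ :=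
  ∑ b ∈ range k, if j ≤ b then (φ b - φ (b + 1)) ^ 2 else 0

theorem kappa_pos (K : Ranking G k f e φ) {j : ℕ} (hj : j < k) : 0 < kappa k φ j := by
  refine Finset.sum_pos' (fun b _ => ?_) ⟨k - 1, mem_range.2 (by omega), ?_⟩
  · split_ifs
    · positivity
    · exact le_rfl
  · rw [if_pos (by omega), show k - 1 + 1 = k by omega, K.zero k le_rfl, sub_zero]
    have := K.pos (k - 1) (by omega)
    positivity

/-- The energy of `f` on `G` exceeds the energy of its rearrangement `φ` on the greedy tree by a
sum of nonnegative contributions: one from each excess degree and one from each pair of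
thresholds. -/
theorem energy_gap (K : Ranking G k f e φ) (R : Rooted G r par h) (hd : 2 ≤ d) :
    energy G f = energy (canon d k) (fun i => φ i) +
      (∑ v with e v < k, ((G.degree v : ℝ) - d) * kappa k φ (e v)) +
      2 * ∑ a ∈ range k, ∑ b ∈ range k, (φ a - φ (a + 1)) * (φ b - φ (b + 1)) *
        (edgeCount 0 (cparFin d k) Fin.val a b + (if b < a then excess G d e b else 0)
          - edgeCount r par e a b) := by
  rw [energy_eq_edgeCount R K.zero K.apply,
    energy_eq_edgeCount (canon_rooted d k) K.zero (e := Fin.val) (fun _ => rfl),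
    sum_degree_canon hd (fun i => φ i ^ 2) (fun i hi => by rw [K.zero i hi]; ring)]
  have h1 : ∑ a ∈ range k, ∑ b ∈ range k, (φ a - φ (a + 1)) * (φ b - φ (b + 1)) *
        ((edgeCount 0 (cparFin d k) Fin.val a b : ℝ) + (if b < a then excess G d e b else 0)
          - edgeCount r par e a b) =
      ∑ a ∈ range k, ∑ b ∈ range k, (φ a - φ (a + 1)) * (φ b - φ (b + 1)) *
        (edgeCount 0 (cparFin d k) Fin.val a b : ℝ) +
      ∑ a ∈ range k, ∑ b ∈ range k, (φ a - φ (a + 1)) * (φ b - φ (b + 1)) *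
        (if b < a then excess G d e b else 0) -
      ∑ a ∈ range k, ∑ b ∈ range k, (φ a - φ (a + 1)) * (φ b - φ (b + 1)) *
        (edgeCount r par e a b : ℝ) := by
    simp only [← Finset.sum_add_distrib, ← Finset.sum_sub_distrib]
    refine Finset.sum_congr rfl fun a _ => Finset.sum_congr rfl fun b _ => ?_
    ring
  -- summing over `a > b` telescopes to `φ (b + 1)`
  have h2 : ∑ a ∈ range k, ∑ b ∈ range k, (φ a - φ (a + 1)) * (φ b - φ (b + 1)) *
        (if b < a then excess G d e b else 0) =
      ∑ b ∈ range k, (φ b - φ (b + 1)) * φ (b + 1) * excess G d e b := by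
    rw [Finset.sum_comm]
    refine Finset.sum_congr rfl fun b _ => ?_
    trans (φ b - φ (b + 1)) * (∑ a ∈ range k, if b + 1 ≤ a then φ a - φ (a + 1) else 0) *
      excess G d e b
    swap
    · rw [← abel_single K.zero (b + 1)]
    rw [Finset.mul_sum, Finset.sum_mul]
    refine Finset.sum_congr rfl fun a _ => ?_
    by_cases hab : b < a
    · rw [if_pos hab, if_pos (by omega)]; ring
    · rw [if_neg hab, if_neg (by omega)]; ring
  have h3 : ∑ b ∈ range k, (φ b - φ (b + 1)) * φ (b + 1) * excess G d e b =
      ∑ v with e v < k, ((G.degree v : ℝ) - d) *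
        ∑ b ∈ range k, if e v ≤ b then (φ b - φ (b + 1)) * φ (b + 1) else 0 := by
    simp only [excess, Finset.mul_sum]
    rw [Finset.sum_comm' (t' := univ.filter fun v => e v < k)
      (s' := fun v => (range k).filter fun b => e v ≤ b)]
    · refine Finset.sum_congr rfl fun v _ => ?_
      rw [Finset.sum_filter]
      refine Finset.sum_congr rfl fun b _ => ?_
      split_ifs <;> ring
    · intro b v
      simp only [mem_filter, mem_univ, true_and, mem_range]
      omega
  have h4 : ∀ j, φ j ^ 2 = kappa k φ j +
      2 * ∑ b ∈ range k, if j ≤ b then (φ b - φ (b + 1)) * φ (b + 1) else 0 := by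
    intro j
    rw [abel_single (g := fun i => φ i ^ 2) (fun i hi => by rw [K.zero i hi]; ring) j, kappa,
      Finset.mul_sum, ← Finset.sum_add_distrib]
    refine Finset.sum_congr rfl fun b _ => ?_
    split_ifs <;> ring
  have h5 : ∑ v, (G.degree v : ℝ) * f v ^ 2 =
      ∑ v with e v < k, ((G.degree v : ℝ) - d) * φ (e v) ^ 2 + d * ∑ i ∈ range k, φ i ^ 2 := by
    rw [← K.sum_lt le_rfl (fun i => φ i ^ 2), Finset.mul_sum, ← Finset.sum_add_distrib,
      Finset.sum_filter]
    refine Finset.sum_congr rfl fun v _ => ?_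
    rw [K.apply]
    split_ifs with hv
    · ring
    · rw [K.zero _ (not_lt.1 hv)]; ring
  have h6 : ∑ v with e v < k, ((G.degree v : ℝ) - d) * φ (e v) ^ 2 =
      ∑ v with e v < k, ((G.degree v : ℝ) - d) * kappa k φ (e v) +
      2 * ∑ v with e v < k, ((G.degree v : ℝ) - d) *
        ∑ b ∈ range k, if e v ≤ b then (φ b - φ (b + 1)) * φ (b + 1) else 0 := by
    rw [Finset.mul_sum, ← Finset.sum_add_distrib]
    refine Finset.sum_congr rfl fun v _ => ?_
    rw [h4]
    ring
  rw [h1, h2, h3, h5, h6]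
  ring

end

end

section
variable {V : Type*} [Fintype V] [DecidableEq V] {G : SimpleGraph V} {d k : ℕ}

theorem exists_setup (hk : 1 ≤ k) (hG : inClassTdInterior d k G) :
    ∃ (f : V → ℝ) (e : V → ℕ) (φ : ℕ → ℝ) (r : V) (par : V → V),
      IsDirichletEigenpair G (dirichletLambda G) f ∧ Ranking G k f e φ ∧ e r = 0 ∧
      Rooted G r par (G.dist r) := by
  obtain ⟨hT, hcard, -⟩ := hG
  have hIB := isBoundary_or_isInterior hT
  obtain ⟨⟨f, hf0, hf⟩, -⟩ := exists_first_eigenfunction hIB hT.2.1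
  obtain ⟨e, φ, K⟩ := exists_ranking hcard (f := f) (eigenfunction_pos hT hf0 hf)
    (fun v hv => hf.2.1 v ((hIB v).resolve_right hv))
  obtain ⟨r, hr⟩ := K.surj 0 hk
  obtain ⟨par, R⟩ := exists_rooted hT.1 r
  exact ⟨f, e, φ, r, par, hf, K, hr, R⟩

section
variable {f : V → ℝ} {e : V → ℕ} {φ : ℕ → ℝ} {r : V} {par : V → V} {h : V → ℕ}

theorem Ranking.sum_sq (K : Ranking G k f e φ) (hd : 2 ≤ d) :
    ∑ v, f v ^ 2 = ∑ i : Fin (k * (d - 1) + 2), φ i ^ 2 := by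
  have hz : ∀ i, k ≤ i → φ i ^ 2 = 0 := fun i hi => by rw [K.zero i hi]; ring
  rw [sum_canon hd (fun i => φ i ^ 2) hz, ← K.sum_univ (fun i => φ i ^ 2) hz]
  exact Finset.sum_congr rfl fun v _ => by rw [K.apply]

theorem Ranking.delta_nonneg (K : Ranking G k f e φ) (a : ℕ) : 0 ≤ φ a - φ (a + 1) :=
  sub_nonneg.2 (K.anti (Nat.le_succ a))

/-- The comparison `λ(greedy tree) ≤ λ(G)`, together with what equality forces. -/
theorem canon_le_and_rigid (hd : 2 ≤ d) (hk : 1 ≤ k) (hG : inClassTdInterior d k G)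
    (hf : IsDirichletEigenpair G (dirichletLambda G) f) (K : Ranking G k f e φ) (hr : e r = 0)
    (R : Rooted G r par h) :
    dirichletLambda (canon d k) ≤ dirichletLambda G ∧
    (dirichletLambda G ≤ dirichletLambda (canon d k) →
      (∀ v, IsInterior G v → G.degree v = d) ∧
      (∀ i : Fin (k * (d - 1) + 2), i.1 < k →
        lapApply (canon d k) (fun i => φ i) i = dirichletLambda G * φ i) ∧
      ∀ a < k, ∀ b < k, φ a ≠ φ (a + 1) → φ b ≠ φ (b + 1) →
        edgeCount r par e a b = edgeCount 0 (cparFin d k) Fin.val a b) := by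
  have hIB := isBoundary_or_isInterior hG.1
  have hC := canon_isTreeWithBoundary hd hk
  have hE := energy_of_eigenpair hIB hf
  obtain ⟨-, hray⟩ := exists_first_eigenfunction (isBoundary_or_isInterior hC) hC.2.1
  obtain ⟨hmin, heig⟩ := hray (fun i => φ i)
    (fun i hi => K.zero _ ((canon_isBoundary hd hk i).1 hi))
  rw [← K.sum_sq hd] at hmin heig
  have hgap := energy_gap K R hd
  rw [hE] at hgap
  have hS : 0 < ∑ v, f v ^ 2 := by
    obtain ⟨v, hv⟩ := Function.ne_iff.1 hf.1
    exact Finset.sum_pos' (fun _ _ => sq_nonneg _) ⟨v, mem_univ v, by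
      have : f v ≠ 0 := hv
      positivity⟩
  have ht1 : ∀ v ∈ univ.filter (fun v => e v < k),
      0 ≤ ((G.degree v : ℝ) - d) * kappa k φ (e v) := by
    intro v hv
    simp only [mem_filter, mem_univ, true_and] at hv
    have h1 : (d : ℝ) ≤ G.degree v := by exact_mod_cast hG.2.2 v ((K.lt_iff v).1 hv)
    exact mul_nonneg (by linarith) (kappa_pos K hv).le
  have ht2 : ∀ a ∈ range k, ∀ b ∈ range k, 0 ≤ (φ a - φ (a + 1)) * (φ b - φ (b + 1)) *
        (edgeCount 0 (cparFin d k) Fin.val a b + (if b < a then excess G d e b else 0)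
          - edgeCount r par e a b) := by
    intro a ha b hb
    have h1 := edgeCount_le K R hd hr hG.2.2 (mem_range.1 ha) (mem_range.1 hb)
    exact mul_nonneg (mul_nonneg (K.delta_nonneg a) (K.delta_nonneg b)) (by linarith)
  have hs1 := Finset.sum_nonneg ht1
  have hs2 := Finset.sum_nonneg fun a ha => Finset.sum_nonneg (ht2 a ha)
  refine ⟨?_, fun hle => ?_⟩
  · refine le_of_mul_le_mul_right ?_ hS
    linarith
  have hle' := mul_le_mul_of_nonneg_right hle hS.le
  have hz1 : ∑ v with e v < k, ((G.degree v : ℝ) - d) * kappa k φ (e v) = 0 := by linarith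
  have hz2 : ∑ a ∈ range k, ∑ b ∈ range k, (φ a - φ (a + 1)) * (φ b - φ (b + 1)) *
        (edgeCount 0 (cparFin d k) Fin.val a b + (if b < a then excess G d e b else 0)
          - edgeCount r par e a b) = 0 := by linarith
  have hlam : dirichletLambda (canon d k) = dirichletLambda G := by
    refine le_antisymm ?_ hle
    refine le_of_mul_le_mul_right ?_ hS
    linarith
  have hreg : ∀ v, IsInterior G v → G.degree v = d := by
    intro v hv
    have hv' := (K.lt_iff v).2 hv
    have h1 := (Finset.sum_eq_zero_iff_of_nonneg ht1).1 hz1 v (by simpa using hv')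
    have h2 := (mul_eq_zero.1 h1).resolve_right (kappa_pos K hv').ne'
    exact_mod_cast sub_eq_zero.1 h2
  refine ⟨hreg, fun i hi => ?_, fun a ha b hb hda hdb => ?_⟩
  · rw [← hlam]
    exact heig (by linarith) i ((canon_isInterior hd hk i).2 hi)
  · have hex : excess G d e b = 0 := by
      refine Finset.sum_eq_zero fun v hv => ?_
      simp only [mem_filter, mem_univ, true_and] at hv
      rw [hreg v ((K.lt_iff v).1 (by omega)), sub_self]
    have h1 := (Finset.sum_eq_zero_iff_of_nonneg
      (fun a ha => Finset.sum_nonneg (ht2 a ha))).1 hz2 a (mem_range.2 ha)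
    have h2 := (Finset.sum_eq_zero_iff_of_nonneg (ht2 a (mem_range.2 ha))).1 h1 b
      (mem_range.2 hb)
    rw [hex, ite_self, add_zero] at h2
    have h3 := (mul_eq_zero.1 h2).resolve_left
      (mul_ne_zero (sub_ne_zero.2 hda) (sub_ne_zero.2 hdb))
    exact_mod_cast (sub_eq_zero.1 h3).symm

/-- In the case of equality the joint distribution of the values of `f` at the two ends of an edge
is the same as for `φ` on the greedy tree. -/
theorem bilinear_eq (K : Ranking G k f e φ) (R : Rooted G r par h) (hd : 2 ≤ d)
    (hreg : ∀ v, IsInterior G v → G.degree v = d)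
    (hcount : ∀ a < k, ∀ b < k, φ a ≠ φ (a + 1) → φ b ≠ φ (b + 1) →
        edgeCount r par e a b = edgeCount 0 (cparFin d k) Fin.val a b)
    (A B : ℝ → ℝ) (hA : A 0 = 0) :
    ∑ v, A (f v) * ∑ w ∈ G.neighborFinset v, B (f w) =
      ∑ i ∈ range k, A (φ i) *
        (B (φ (upper d i)) + ∑ t ∈ range (d - 1), B (φ (i * (d - 1) + 2 + t))) := by
  have hzA : ∀ i, k ≤ i → A (φ i) = 0 := fun i hi => by rw [K.zero i hi, hA]
  -- reduction to `B 0 = 0`, where summation by parts applies to both factors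
  have key : ∀ B : ℝ → ℝ, B 0 = 0 → ∑ v, A (f v) * ∑ w ∈ G.neighborFinset v, B (f w) =
      ∑ i : Fin (k * (d - 1) + 2), A (φ i) * ∑ l ∈ (canon d k).neighborFinset i, B (φ l) := by
    intro B hB
    have hzB : ∀ i, k ≤ i → B (φ i) = 0 := fun i hi => by rw [K.zero i hi, hB]
    have hpair : ∀ A B : ℝ → ℝ, (∀ i, k ≤ i → A (φ i) = 0) → (∀ i, k ≤ i → B (φ i) = 0) →
        ∑ c with c ≠ r, A (f c) * B (f (par c)) =
        ∑ c : Fin (k * (d - 1) + 2) with c ≠ 0, A (φ c) * B (φ (cparFin d k c)) := by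
      intro A B hA hB
      have h1 := sum_edges_eq (g := fun i => A (φ i)) (g' := fun i => B (φ i)) hA hB r par e
      have h2 := sum_edges_eq (g := fun i => A (φ i)) (g' := fun i => B (φ i)) hA hB
        0 (cparFin d k) Fin.val
      simp only [K.apply]
      refine h1.trans (Eq.trans ?_ h2.symm)
      refine Finset.sum_congr rfl fun a ha => Finset.sum_congr rfl fun b hb => ?_
      by_cases hda : φ a = φ (a + 1)
      · simp [hda]
      by_cases hdb : φ b = φ (b + 1)
      · simp [hdb]
      rw [hcount a (mem_range.1 ha) b (mem_range.1 hb) hda hdb]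
    simp only [Finset.mul_sum]
    rw [R.sum_adj (fun v w => A (f v) * B (f w)),
      (canon_rooted d k).sum_adj (fun v w => A (φ v) * B (φ w)),
      Finset.sum_add_distrib, Finset.sum_add_distrib, hpair A B hzA hzB]
    congr 1
    have := hpair B A hzB hzA
    simp only [mul_comm (B _)] at this
    exact this
  have hcanon : ∀ B : ℝ → ℝ,
      ∑ i : Fin (k * (d - 1) + 2), A (φ i) * ∑ l ∈ (canon d k).neighborFinset i, B (φ l) =
      ∑ i ∈ range k, A (φ i) *
        (B (φ (upper d i)) + ∑ t ∈ range (d - 1), B (φ (i * (d - 1) + 2 + t))) := by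
    intro B
    rw [← sum_canon hd (fun i => A (φ i) *
        (B (φ (upper d i)) + ∑ t ∈ range (d - 1), B (φ (i * (d - 1) + 2 + t))))
        (fun i hi => by rw [hzA i hi, zero_mul])]
    refine Finset.sum_congr rfl fun i _ => ?_
    by_cases hi : i.1 < k
    · rw [canon_sum_neighbor hd (fun l => B (φ l)) i hi]
    · rw [hzA i (not_lt.1 hi), zero_mul, zero_mul]
  have h1 := (key (fun t => B t - B 0) (sub_self _)).trans (hcanon fun t => B t - B 0)
  have h2 : ∑ v, A (f v) * ∑ w ∈ G.neighborFinset v, (B (f w) - B 0) =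
      ∑ v, A (f v) * ∑ w ∈ G.neighborFinset v, B (f w) - (∑ v, A (f v)) * (d * B 0) := by
    rw [Finset.sum_mul, ← Finset.sum_sub_distrib]
    refine Finset.sum_congr rfl fun v _ => ?_
    by_cases hv : e v < k
    · rw [Finset.sum_sub_distrib, Finset.sum_const, SimpleGraph.card_neighborFinset_eq_degree,
        hreg v ((K.lt_iff v).1 hv), nsmul_eq_mul]
      ring
    · rw [K.apply, hzA _ (not_lt.1 hv)]
      ring
  have h3 : ∑ i ∈ range k, A (φ i) *
        ((B (φ (upper d i)) - B 0) + ∑ t ∈ range (d - 1), (B (φ (i * (d - 1) + 2 + t)) - B 0)) =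
      ∑ i ∈ range k, A (φ i) *
        (B (φ (upper d i)) + ∑ t ∈ range (d - 1), B (φ (i * (d - 1) + 2 + t))) -
      (∑ i ∈ range k, A (φ i)) * (d * B 0) := by
    rw [Finset.sum_mul, ← Finset.sum_sub_distrib]
    refine Finset.sum_congr rfl fun i _ => ?_
    rw [Finset.sum_sub_distrib, Finset.sum_const, card_range, nsmul_eq_mul,
      Nat.cast_sub (by omega : 1 ≤ d)]
    push_cast
    ring
  have h4 : ∑ v, A (f v) = ∑ i ∈ range k, A (φ i) := by
    rw [← K.sum_univ (fun i => A (φ i)) hzA]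
    exact Finset.sum_congr rfl fun v _ => by rw [K.apply]
  rw [h2, h3, h4] at h1
  linarith

end
end

/-! ### Rigidity in the case of equality -/

/-- If two interior vertices `i < j` of the greedy tree carry the same value, comparing their
eigenvalue equations term by term forces equal values at the two upper neighbours and one common
value at all other neighbours. -/
theorem tie {d k : ℕ} {φ : ℕ → ℝ} {μ : ℝ} (hanti : Antitone φ)
    (heig : ∀ i < k, φ (upper d i) + ∑ t ∈ range (d - 1), φ (i * (d - 1) + 2 + t) = μ * φ i)
    {i j : ℕ} (hij : i < j) (hj : j < k) (hφ : φ i = φ j) :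
    φ i ≤ φ (upper d i) ∧ φ (upper d i) = φ (upper d j) ∧
    ∀ s < d - 1, ∀ t < d - 1, φ (i * (d - 1) + 2 + s) = φ (j * (d - 1) + 2 + t) := by
  have hup0 : i = 0 → φ 1 = φ 0 := by
    rintro rfl
    have h1 : φ j ≤ φ 1 := hanti (by omega)
    have h2 : φ 1 ≤ φ 0 := hanti (by omega)
    linarith
  have hself : φ i ≤ φ (upper d i) := by
    unfold upper
    split_ifs with h
    · rw [hup0 h, h]
    · exact hanti (cpar_lt h).le
  have hup : φ (upper d j) ≤ φ (upper d i) := by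
    unfold upper
    rw [if_neg (by omega : j ≠ 0)]
    split_ifs with h
    · rw [hup0 h]
      exact hanti (Nat.zero_le _)
    · exact hanti (cpar_mono hij.le)
  have hmul : i * (d - 1) + (d - 1) ≤ j * (d - 1) := by
    have := Nat.mul_le_mul_right (d - 1) hij
    rwa [Nat.succ_mul] at this
  have hlow : ∀ s t, s < d - 1 → φ (j * (d - 1) + 2 + t) ≤ φ (i * (d - 1) + 2 + s) :=
    fun s t hs => hanti (by omega)
  have h1 := heig i (by omega)
  have h2 := heig j hj
  rw [hφ, ← h2] at h1
  have hsum : ∑ t ∈ range (d - 1), φ (j * (d - 1) + 2 + t) ≤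
      ∑ t ∈ range (d - 1), φ (i * (d - 1) + 2 + t) :=
    Finset.sum_le_sum fun t ht => hlow t t (mem_range.1 ht)
  have hsumeq : ∑ t ∈ range (d - 1), φ (j * (d - 1) + 2 + t) =
      ∑ t ∈ range (d - 1), φ (i * (d - 1) + 2 + t) := by linarith
  have hterm := (Finset.sum_eq_sum_iff_of_le fun t ht => hlow t t (mem_range.1 ht)).1 hsumeq
  refine ⟨hself, by linarith, fun s hs t ht => ?_⟩
  have h3 := hterm s (mem_range.2 hs)
  have h4 := hterm t (mem_range.2 ht)
  have h5 := hlow s t hs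
  have h6 := hlow t s ht
  linarith

section
variable {V : Type*} [Fintype V] [DecidableEq V] {G : SimpleGraph V} {d k : ℕ}
  {f : V → ℝ} {e : V → ℕ} {φ : ℕ → ℝ} {r : V} {par : V → V} {h : V → ℕ}

/-- In the case of equality the values of `f` around an interior vertex `v` are those of `φ` around
any vertex `i` of the greedy tree with `φ i = f v`.  This follows from the joint distribution of
values along edges when the value `f v` is taken only once; if it is repeated, then the eigenvalue
equation leaves only two possible values around such vertices, and it also fixes how often each of
them occurs. -/
theorem local_values_eq (K : Ranking G k f e φ) (hd : 2 ≤ d) {lam : ℝ} (hlam : 0 < lam)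
    (hreg : ∀ v, IsInterior G v → G.degree v = d)
    (hG : ∀ v, IsInterior G v → ∑ w ∈ G.neighborFinset v, f w = (d - lam) * f v)
    (heig : ∀ i < k, φ (upper d i) + ∑ t ∈ range (d - 1), φ (i * (d - 1) + 2 + t) =
      (d - lam) * φ i)
    (hbil : ∀ A B : ℝ → ℝ, A 0 = 0 → ∑ v, A (f v) * ∑ w ∈ G.neighborFinset v, B (f w) =
      ∑ i ∈ range k, A (φ i) *
        (B (φ (upper d i)) + ∑ t ∈ range (d - 1), B (φ (i * (d - 1) + 2 + t))))
    (B : ℝ → ℝ) {v : V} {i : ℕ} (hi : i < k) (hvi : f v = φ i) :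
    ∑ w ∈ G.neighborFinset v, B (f w) =
      B (φ (upper d i)) + ∑ t ∈ range (d - 1), B (φ (i * (d - 1) + 2 + t)) := by
  have hx : 0 < φ i := K.pos i hi
  have hev : e v < k := by
    by_contra hlt
    rw [K.apply, K.zero _ (not_lt.1 hlt)] at hvi
    linarith
  have hvI := (K.lt_iff v).1 hev
  set A : ℝ → ℝ := fun t => if t = φ i then 1 else 0 with hA
  have hA0 : A 0 = 0 := if_neg hx.ne
  by_cases hsing : ∀ j < k, φ j = φ i → j = i
  · have hb := hbil A B hA0
    rw [Finset.sum_eq_single v, Finset.sum_eq_single i] at hb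
    · simpa only [hA, hvi, if_true, one_mul] using hb
    · intro j hj hne
      have : φ j ≠ φ i := fun h => hne (hsing j (mem_range.1 hj) h)
      simp [hA, this]
    · intro hn; exact absurd (mem_range.2 hi) hn
    · intro u _ hne
      have : f u ≠ φ i := by
        intro hu
        have heu : e u < k := by
          by_contra hlt
          rw [K.apply, K.zero _ (not_lt.1 hlt)] at hu
          linarith
        have h1 := hsing (e u) heu (by rw [← K.apply, hu])
        have h2 := hsing (e v) hev (by rw [← K.apply, hvi])
        exact hne (K.inj u v heu (by omega))
      simp [hA, this]
    · simp
  · push Not at hsing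
    obtain ⟨j, hj, hφ, hne⟩ := hsing
    have htie : ∀ a < k, ∀ b < k, φ a = φ i → φ b = φ i → a ≠ b →
        φ (upper d a) = φ (upper d b) ∧
        ∀ s < d - 1, ∀ t < d - 1, φ (a * (d - 1) + 2 + s) = φ (b * (d - 1) + 2 + t) := by
      intro a ha b hb hai hbi hab
      rcases lt_or_gt_of_ne hab with hlt | hlt
      · exact (tie K.anti heig hlt hb (by rw [hai, hbi])).2
      · have := (tie K.anti heig hlt ha (by rw [hai, hbi])).2
        exact ⟨this.1.symm, fun s hs t ht => (this.2 t ht s hs).symm⟩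
    obtain ⟨hij1, hij2⟩ := htie i hi j hj rfl hφ hne.symm
    set z := φ (upper d i) with hz
    set y := φ (i * (d - 1) + 2 + 0) with hy
    have hd0 : 0 < d - 1 := by omega
    have hdc : ((d - 1 : ℕ) : ℝ) = (d : ℝ) - 1 := by
      rw [Nat.cast_sub (by omega : 1 ≤ d)]; simp
    have hall : ∀ a < k, φ a = φ i → φ (upper d a) = z ∧
        ∀ t < d - 1, φ (a * (d - 1) + 2 + t) = y := by
      intro a ha hai
      by_cases hia : a = i
      · subst hia
        exact ⟨rfl, fun t ht => (hij2 t ht 0 hd0).trans (hij2 0 hd0 0 hd0).symm⟩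
      · have := htie a ha i hi hai rfl hia
        exact ⟨this.1, fun t ht => this.2 t ht 0 hd0⟩
    have hcs : ∀ B : ℝ → ℝ, ∀ a < k, φ a = φ i → B (φ (upper d a)) +
        ∑ t ∈ range (d - 1), B (φ (a * (d - 1) + 2 + t)) = B z + (d - 1) * B y := by
      intro B a ha hai
      obtain ⟨h1, h2⟩ := hall a ha hai
      rw [h1, Finset.sum_congr rfl fun t ht => by rw [h2 t (mem_range.1 ht)], Finset.sum_const,
        card_range, nsmul_eq_mul, hdc]
    have hzy : z + (d - 1) * y = (d - lam) * φ i :=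
      (hcs (fun t => t) i hi rfl).symm.trans (heig i hi)
    have hne' : z ≠ y := by
      intro heq
      have h1 : φ i ≤ z := by
        rcases lt_or_gt_of_ne hne with hlt | hlt
        · have := (tie K.anti heig hlt hi hφ).1
          rw [hij1]
          linarith
        · exact (tie K.anti heig hlt hj hφ.symm).1
      have h2 : y ≤ φ i := K.anti (by
        have : i * 1 ≤ i * (d - 1) := Nat.mul_le_mul_left _ (by omega)
        omega)
      have h3 : y = φ i := le_antisymm h2 (heq ▸ h1)
      rw [heq, h3] at hzy
      have : lam * φ i = 0 := by linarith
      exact (mul_pos hlam hx).ne' this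
    -- testing with `B t = (t - z)² (t - y)²` shows that only the values `z` and `y` occur
    have hval : ∀ w ∈ G.neighborFinset v, f w = z ∨ f w = y := by
      set B₀ : ℝ → ℝ := fun t => (t - z) ^ 2 * (t - y) ^ 2 with hB₀
      have hb := hbil A B₀ hA0
      have hB₀n : ∀ t, 0 ≤ B₀ t := fun t => by simp only [hB₀]; positivity
      have hAn : ∀ t, 0 ≤ A t := fun t => by
        simp only [hA]; split_ifs <;> norm_num
      have hrhs : ∑ i ∈ range k, A (φ i) * (B₀ (φ (upper d i)) +
          ∑ t ∈ range (d - 1), B₀ (φ (i * (d - 1) + 2 + t))) = 0 := by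
        refine Finset.sum_eq_zero fun a ha => ?_
        by_cases hai : φ a = φ i
        · rw [hcs B₀ a (mem_range.1 ha) hai]
          simp [hB₀]
        · simp [hA, hai]
      rw [hrhs] at hb
      have h1 := (Finset.sum_eq_zero_iff_of_nonneg fun u _ =>
        mul_nonneg (hAn _) (Finset.sum_nonneg fun w _ => hB₀n _)).1 hb v (mem_univ v)
      have hAv : A (f v) = 1 := if_pos hvi
      rw [hAv, one_mul] at h1
      intro w hw
      have h2 := (Finset.sum_eq_zero_iff_of_nonneg fun w _ => hB₀n _).1 h1 w hw
      simp only [hB₀] at h2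
      rcases mul_eq_zero.1 h2 with h3 | h3
      · exact Or.inl (sub_eq_zero.1 (pow_eq_zero_iff two_ne_zero |>.1 h3))
      · exact Or.inr (sub_eq_zero.1 (pow_eq_zero_iff two_ne_zero |>.1 h3))
    rw [hcs B i hi rfl]
    -- on `{z, y}` the function `B` agrees with an affine one
    set β := (B z - B y) / (z - y) with hβ
    have hβ' : β * (z - y) = B z - B y := div_mul_cancel₀ _ (sub_ne_zero.2 hne')
    have haff : ∀ w ∈ G.neighborFinset v, B (f w) = (B y - β * y) + β * f w := by
      intro w hw
      rcases hval w hw with h1 | h1 <;> rw [h1]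
      · linarith
      · ring
    rw [Finset.sum_congr rfl haff, Finset.sum_add_distrib, ← Finset.mul_sum, hG v hvI, hvi,
      ← hzy, Finset.sum_const, SimpleGraph.card_neighborFinset_eq_degree, hreg v hvI,
      nsmul_eq_mul]
    have : B z = B y + β * (z - y) := by linarith
    rw [this]
    ring

/-- One step in the construction of the isomorphism: an embedding of the first `m` vertices of the
greedy tree extends to vertex `m`. -/
theorem extend_embedding (R : Rooted G r par h) (hd : 2 ≤ d) (hk : 1 ≤ k)
    (hloc : ∀ (B : ℝ → ℝ) (v : V) (i : ℕ), i < k → f v = φ i →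
      ∑ w ∈ G.neighborFinset v, B (f w) =
        B (φ (upper d i)) + ∑ t ∈ range (d - 1), B (φ (i * (d - 1) + 2 + t)))
    {m : ℕ} (hm1 : 1 ≤ m) (hm : m < k * (d - 1) + 2) (σ : ℕ → V) (hσ0 : σ 0 = r)
    (hσφ : ∀ i < m, f (σ i) = φ i) (hσinj : ∀ i < m, ∀ j < m, σ i = σ j → i = j)
    (hσpar : ∀ i < m, i ≠ 0 → par (σ i) = σ (cpar d i)) :
    ∃ w, w ≠ r ∧ par w = σ (cpar d m) ∧ f w = φ m ∧ ∀ i < m, σ i ≠ w := by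
  set j := cpar d m with hj
  have hjk : j < k := cpar_lt_of_lt hd hk hm
  have hjm : j < m := cpar_lt (by omega)
  have hjn : j < k * (d - 1) + 2 := by omega
  set B : ℝ → ℝ := fun t => if t = φ m then 1 else 0 with hB
  have h1 := hloc B (σ j) j hjk (hσφ j hjm)
  have h2 := canon_sum_neighbor hd (fun l => B (φ l)) (⟨j, hjn⟩ : Fin (k * (d - 1) + 2)) hjk
  rw [← h2, R.sum_neighbor (fun w => B (f w)),
    (canon_rooted d k).sum_neighbor (fun l => B (φ l.1))] at h1
  have h3 : (if σ j = r then 0 else B (f (par (σ j)))) =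
      if (⟨j, hjn⟩ : Fin (k * (d - 1) + 2)) = 0 then 0 else
        B (φ (cparFin d k ⟨j, hjn⟩).1) := by
    have hiff : (⟨j, hjn⟩ : Fin (k * (d - 1) + 2)) = 0 ↔ j = 0 := by
      rw [Fin.ext_iff]; rfl
    by_cases hj0 : j = 0
    · rw [if_pos (by rw [hj0, hσ0]), if_pos (hiff.2 hj0)]
    · have hne : σ j ≠ r := by
        rw [← hσ0]
        exact fun heq => hj0 (hσinj j hjm 0 (by omega) heq)
      rw [if_neg hne, if_neg (fun h => hj0 (hiff.1 h)), hσpar j hjm hj0,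
        hσφ _ ((cpar_lt hj0).trans hjm)]
      rfl
  rw [h3, add_right_inj] at h1
  simp only [hB, ← Finset.sum_filter, Finset.filter_filter, Finset.sum_const, nsmul_eq_mul,
    mul_one, Nat.cast_inj] at h1
  -- `h1`: equally many children of value `φ m` below `σ j` and below `j`
  by_contra hcon
  push Not at hcon
  set T := univ.filter fun c : Fin (k * (d - 1) + 2) =>
    (c ≠ 0 ∧ cparFin d k c = ⟨j, hjn⟩) ∧ φ c.1 = φ m with hT
  have hmT : (⟨m, hm⟩ : Fin (k * (d - 1) + 2)) ∈ T := by
    simp only [hT, mem_filter, mem_univ, true_and]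
    refine ⟨⟨fun h => ?_, rfl⟩, trivial⟩
    have : m = 0 := congrArg Fin.val h
    omega
  have hsub : (univ.filter fun c : V => (c ≠ r ∧ par c = σ j) ∧ f c = φ m) ⊆
      (T.erase ⟨m, hm⟩).image fun c => σ c.1 := by
    intro c hc
    simp only [mem_filter, mem_univ, true_and] at hc
    obtain ⟨⟨hcr, hcp⟩, hcf⟩ := hc
    obtain ⟨i, him, rfl⟩ := hcon c hcr hcp hcf
    have hi0 : i ≠ 0 := by
      rintro rfl
      exact hcr hσ0
    rw [mem_image]
    refine ⟨⟨i, by omega⟩, ?_, rfl⟩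
    rw [mem_erase]
    refine ⟨fun h => ?_, ?_⟩
    · have : i = m := congrArg Fin.val h
      omega
    · simp only [hT, mem_filter, mem_univ, true_and]
      refine ⟨⟨fun h => hi0 (congrArg Fin.val h), ?_⟩, ?_⟩
      · apply Fin.ext
        change cpar d i = j
        rw [hσpar i him hi0] at hcp
        exact hσinj _ ((cpar_lt hi0).trans him) _ hjm hcp
      · rw [← hσφ i him, hcf]
  have h4 := (Finset.card_le_card hsub).trans Finset.card_image_le
  rw [Finset.card_erase_of_mem hmT] at h4
  have h5 : 0 < #T := Finset.card_pos.2 ⟨_, hmT⟩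
  have h6 : #(univ.filter fun c : V => (c ≠ r ∧ par c = σ j) ∧ f c = φ m) = #T := h1
  omega

theorem iso_canon_of_local (K : Ranking G k f e φ) (R : Rooted G r par h) (hr : e r = 0)
    (hd : 2 ≤ d) (hk : 1 ≤ k) (hcard : Fintype.card V = k * (d - 1) + 2)
    (hloc : ∀ (B : ℝ → ℝ) (v : V) (i : ℕ), i < k → f v = φ i →
      ∑ w ∈ G.neighborFinset v, B (f w) =
        B (φ (upper d i)) + ∑ t ∈ range (d - 1), B (φ (i * (d - 1) + 2 + t))) :
    Nonempty (G ≃g canon d k) := by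
  have main : ∀ m, 1 ≤ m → m ≤ k * (d - 1) + 2 → ∃ σ : ℕ → V, σ 0 = r ∧
      (∀ i < m, f (σ i) = φ i) ∧ (∀ i < m, ∀ j < m, σ i = σ j → i = j) ∧
      (∀ i < m, i ≠ 0 → par (σ i) = σ (cpar d i)) := by
    intro m hm1
    induction m, hm1 using Nat.le_induction with
    | base =>
      intro _
      refine ⟨fun _ => r, rfl, fun i hi => ?_, fun i hi j hj _ => by omega,
        fun i hi h0 => absurd (by omega) h0⟩
      rw [K.apply, hr, show i = 0 by omega]
    | succ m hm1 ih =>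
      intro hm
      obtain ⟨σ, hσ0, hσφ, hσinj, hσpar⟩ := ih (by omega)
      obtain ⟨w, hwr, hwp, hwf, hwn⟩ :=
        extend_embedding R hd hk hloc hm1 (by omega) σ hσ0 hσφ hσinj hσpar
      have hold : ∀ i < m, Function.update σ m w i = σ i := fun i hi =>
        Function.update_of_ne (by omega) _ _
      have hnew : Function.update σ m w m = w := Function.update_self _ _ _
      refine ⟨Function.update σ m w, ?_, ?_, ?_, ?_⟩
      · rw [hold 0 (by omega), hσ0]
      · intro i hi
        rcases Nat.lt_succ_iff_lt_or_eq.1 hi with hi | rfl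
        · rw [hold i hi, hσφ i hi]
        · rw [hnew, hwf]
      · intro i hi j hj
        rcases Nat.lt_succ_iff_lt_or_eq.1 hi with hi | rfl <;>
          rcases Nat.lt_succ_iff_lt_or_eq.1 hj with hj | rfl
        · rw [hold i hi, hold j hj]
          exact hσinj i hi j hj
        · rw [hold i hi, hnew]
          exact fun heq => absurd heq (hwn i hi)
        · rw [hold j hj, hnew]
          exact fun heq => absurd heq.symm (hwn j hj)
        · exact fun _ => rfl
      · intro i hi h0
        rcases Nat.lt_succ_iff_lt_or_eq.1 hi with hi | rfl
        · rw [hold i hi, hold _ ((cpar_lt h0).trans hi), hσpar i hi h0]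
        · rw [hnew, hold _ (cpar_lt h0), hwp]
  obtain ⟨σ, hσ0, -, hσinj, hσpar⟩ := main (k * (d - 1) + 2) (by omega) le_rfl
  have hinj : Function.Injective fun i : Fin (k * (d - 1) + 2) => σ i := fun i j hij =>
    Fin.ext (hσinj i i.2 j j.2 hij)
  refine R.nonempty_iso (canon_rooted d k) (fun i => σ i)
    ((Fintype.bijective_iff_injective_and_card _).2 ⟨hinj, by rw [hcard, Fintype.card_fin]⟩)
    hσ0 fun i hi => ?_
  exact hσpar i i.2 fun h => hi (Fin.ext h)

end

section
variable {V : Type*} [Fintype V] [DecidableEq V] {G : SimpleGraph V} {d k : ℕ}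

theorem canon_le (hd : 2 ≤ d) (hk : 1 ≤ k) (hG : inClassTdInterior d k G) :
    dirichletLambda (canon d k) ≤ dirichletLambda G := by
  obtain ⟨f, e, φ, r, par, hf, K, hr, R⟩ := exists_setup hk hG
  exact (canon_le_and_rigid hd hk hG hf K hr R).1

theorem iso_canon_of_le (hd : 2 ≤ d) (hk : 1 ≤ k) (hG : inClassTdInterior d k G)
    (hle : dirichletLambda G ≤ dirichletLambda (canon d k)) : Nonempty (G ≃g canon d k) := by
  obtain ⟨f, e, φ, r, par, hf, K, hr, R⟩ := exists_setup hk hG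
  obtain ⟨hreg, heig, hcount⟩ := (canon_le_and_rigid hd hk hG hf K hr R).2 hle
  refine iso_canon_of_local K R hr hd hk (card_of_regular hd hG hreg) fun B v i hi hvi => ?_
  refine local_values_eq K hd (dirichletLambda_pos hG.1) hreg (fun u hu => ?_) (fun j hj => ?_)
    (bilinear_eq K R hd hreg hcount) B hi hvi
  · have h1 := hf.2.2 u hu
    unfold lapApply at h1
    rw [hreg u hu] at h1
    linarith
  · have hjn : j < k * (d - 1) + 2 := by
      have := le_canon_card (k := k) hd
      omega
    have h1 := heig ⟨j, hjn⟩ hj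
    unfold lapApply at h1
    rw [canon_degree_interior hd ⟨j, hjn⟩ hj,
      canon_sum_neighbor hd (fun l => φ l) ⟨j, hjn⟩ hj] at h1
    simp only at h1
    linarith

/-- The minimisers of `λ` are exactly the copies of the greedy tree. -/
theorem hasFK_iff (hd : 2 ≤ d) (hk : 1 ≤ k) (hG : inClassTdInterior d k G) :
    hasFKTdInterior d k G ↔ Nonempty (G ≃g canon d k) := by
  constructor
  · intro hFK
    exact iso_canon_of_le hd hk hG (hFK.2 _ (canon d k) (canon_inClass hd hk))
  · rintro ⟨i⟩
    refine ⟨hG, fun m G' hG' => ?_⟩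
    rw [iso_dirichletLambda i]
    exact canon_le hd hk hG'

end

/-- **Theorem.** A tree `G` has the Faber-Krahn property in `T_d^(·,k)` if and
only if it is an SLO*-tree in which every interior vertex has degree exactly
`d`; `G` is then uniquely determined up to isomorphism. -/
theorem faberKrahn_TdInterior (d k : ℕ) (hd : 2 ≤ d) (hk : 1 ≤ k)
    {V : Type} [Fintype V] [DecidableEq V]
    (G : SimpleGraph V) (hG : inClassTdInterior d k G) :
    (hasFKTdInterior d k G ↔
      (IsSLOStarTree G ∧ ∀ v, IsInterior G v → G.degree v = d)) ∧
    (hasFKTdInterior d k G →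
      ∀ (m : ℕ) (G' : SimpleGraph (Fin m)), hasFKTdInterior d k G' →
        Nonempty (G ≃g G')) := by
  refine ⟨?_, fun hFK m G' hFK' => ?_⟩
  · rw [hasFK_iff hd hk hG]
    constructor
    · rintro ⟨i⟩
      refine ⟨iso_isSLOStarTree i hG.1 (canon_isSLOStarTree hd hk), fun v hv => ?_⟩
      rw [← iso_degree i]
      refine canon_degree_interior hd _ ((canon_isInterior hd hk _).1 ?_)
      unfold IsInterior at *
      rwa [iso_degree i]
    · rintro ⟨hS, hreg⟩
      exact iso_canon_of_isSLOStarTree hd hk hG hreg hS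
  · obtain ⟨i⟩ := (hasFK_iff hd hk hG).1 hFK
    obtain ⟨i'⟩ := (hasFK_iff hd hk hFK'.1).1 hFK'
    exact ⟨i.trans i'.symm⟩

end FK
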